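/- arXiv:1201.5331 — 3 statements merged into one kernel-verified Lean document; each statement's English description precedes it below -/
import Mathlib

section
/- Let V : ℝ³ → ℝ be measurable with V ∈ L^{3/2,1}(ℝ³). Suppose φ : ℝ³ → ℂ is essentially bounded and satisfies, for a.e. x ∈ ℝ³, that y ↦ V(y)φ(y)/‖x−y‖ is integrable and φ(x) = −(1/(4π)) ∫_{ℝ³} V(y)φ(y)/‖x−y‖ dy. Then φ ∈ L^{3,∞}(ℝ³), i.e. sup_{λ>0} λ·(vol{x : |φ(x)| > λ})^{1/3} < ∞. -/
/-!
The kernel `1 / ‖x - y‖` lies in weak `L³` in each variable, uniformly in the other one. Hence the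
potential of `V φ` lies in weak `L³` as soon as `V φ` is integrable, and the operator
`T f = ∫ |V y| f(y) / ‖x - y‖ dy` is bounded, with norm a multiple of the `L^{3/2,1}` norm of `V`,
both on `L^∞` and on weak `L³`, where the latter is measured by testing against indicators of sets.
A bounded `φ` need not make `V φ` integrable, so `V` is split as `V₁ + V₂`, where `V₁` is bounded
with support of finite measure and `V₂` is so small in `L^{3/2,1}` that its operator `T₂` is a
contraction on both spaces. Then `|φ| ≤ g + T₂ |φ|` with `g` in weak `L³`, and iterating this
inequality exhibits `|φ|` as dominated by functions bounded in weak `L³`, up to errors tending to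
zero in `L^∞`.
-/

open MeasureTheory ENNReal

/-- `ℝ³` as a Euclidean space. -/
abbrev E3 := EuclideanSpace ℝ (Fin 3)

/-- The quantity `∫₀^∞ (vol{x : |f x| > λ})^{2/3} dλ`, an equivalent characterization of
the Lorentz `L^{3/2,1}` norm. -/
noncomputable def lorentzNorm321 {α : Type*} [NormedAddCommGroup α] (f : E3 → α) : ℝ≥0∞ :=
  ∫⁻ lam in Set.Ioi (0 : ℝ), (volume {x : E3 | lam < ‖f x‖}) ^ ((2 : ℝ) / 3)

/-- A function belongs to the Lorentz space `L^{3/2,1}(ℝ³)`. -/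
def MemL321 {α : Type*} [NormedAddCommGroup α] (f : E3 → α) : Prop :=
  lorentzNorm321 f < ⊤

/-- The weak-`L³` quasinorm `sup_{λ>0} λ·(vol{x : |f x| > λ})^{1/3}`. -/
noncomputable def weakL3Norm {α : Type*} [NormedAddCommGroup α] (f : E3 → α) : ℝ≥0∞ :=
  ⨆ (lam : ℝ) (_ : 0 < lam),
    ENNReal.ofReal lam * (volume {x : E3 | lam < ‖f x‖}) ^ ((1 : ℝ) / 3)

/-- A function belongs to weak-`L³(ℝ³)`, i.e. `L^{3,∞}`. -/
def MemWeakL3 {α : Type*} [NormedAddCommGroup α] (f : E3 → α) : Prop :=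
  weakL3Norm f < ⊤

open Filter Topology Module

variable {X F : Type*} [MeasurableSpace X] [NormedAddCommGroup F]
  {μ : Measure X} {p q : ℝ} {f g : X → ℝ≥0∞} {M N : ℝ≥0∞} {V : X → F}

/-- The weak-`Lᵖ` quasinorm `sup_{t > 0} t · μ{‖f‖ > t}^{1/p}`. -/
noncomputable def weakLpNorm (μ : Measure X) (p : ℝ) (f : X → F) : ℝ≥0∞ :=
  ⨆ (t : ℝ) (_ : 0 < t), ENNReal.ofReal t * μ {x | t < ‖f x‖} ^ p⁻¹

/-- The quantity `∫₀^∞ μ{‖f‖ > t}^{1/q} dt`, which is equivalent to the norm of the Lorentz space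
`L^{q,1}`. -/
noncomputable def lorentzNorm (μ : Measure X) (q : ℝ) (f : X → F) : ℝ≥0∞ :=
  ∫⁻ t in Set.Ioi (0 : ℝ), μ {x | t < ‖f x‖} ^ q⁻¹

/-- `HasMarcinkiewiczBound μ q f M` says that `∫_B f ≤ M · μ(B)^{1/q}` for every measurable set `B`.
For conjugate exponents `p` and `q`, this is weak-`Lᵖ` boundedness of `f` tested against indicators;
unlike the weak quasinorm, it is additive in `f` and passes through integrals. -/
def HasMarcinkiewiczBound (μ : Measure X) (q : ℝ) (f : X → ℝ≥0∞) (M : ℝ≥0∞) : Prop :=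
  ∀ B, MeasurableSet B → ∫⁻ x in B, f x ∂μ ≤ M * μ B ^ q⁻¹

/-- The potential `x ↦ ∫ k(x, y) ‖V y‖ f(y) dμ(y)` of `f` for the kernel `k` and the weight `V`.
It is the positive operator that dominates the integral operator with kernel `k(x, y) V(y)`. -/
noncomputable def weightedPotential (μ : Measure X) (k : X → X → ℝ≥0∞) (V : X → F) (f : X → ℝ≥0∞)
    (x : X) : ℝ≥0∞ :=
  ∫⁻ y, ‖V y‖ₑ * f y * k x y ∂μ

lemma lorentzNorm321_eq (V : E3 → F) : lorentzNorm321 V = lorentzNorm volume (3 / 2) V := by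
  simp only [lorentzNorm321, lorentzNorm, inv_div]

lemma weakL3Norm_eq (φ : E3 → F) : weakL3Norm φ = weakLpNorm volume 3 φ := by
  simp only [weakL3Norm, weakLpNorm, one_div]

lemma antitone_distribution_rpow (hq : 0 < q) (V : X → F) :
    Antitone fun t : ℝ => μ {x | t < ‖V x‖} ^ q⁻¹ := fun _ _ hst =>
  ENNReal.rpow_le_rpow (measure_mono fun _ hx => hst.trans_lt hx) (inv_pos.mpr hq).le

lemma weakLpNorm_le_iff (hp : 0 < p) {f : X → F} :
    weakLpNorm μ p f ≤ M ↔ ∀ t, 0 < t → μ {x | t < ‖f x‖} ≤ (M / ENNReal.ofReal t) ^ p := by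
  simp only [weakLpNorm, iSup_le_iff]
  refine forall₂_congr fun t ht => ?_
  rw [← ENNReal.rpow_inv_le_iff hp, ENNReal.le_div_iff_mul_le (by simp [ht]) (by simp), mul_comm]

lemma measure_lt_norm_lt_top_of_lorentzNorm_lt_top (hq : 0 < q) (hV : lorentzNorm μ q V < ⊤) {t : ℝ}
    (ht : 0 < t) : μ {x | t < ‖V x‖} < ⊤ := by
  by_contra! htop
  refine hV.not_ge ?_
  calc (⊤ : ℝ≥0∞) = ∫⁻ _ in Set.Ioc 0 t, ⊤ := by simp [ht]
    _ ≤ ∫⁻ s in Set.Ioc 0 t, μ {x | s < ‖V x‖} ^ q⁻¹ := by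
      refine setLIntegral_mono' measurableSet_Ioc fun s hs => ?_
      rw [← ENNReal.top_rpow_of_pos (inv_pos.mpr hq)]
      gcongr
      exact htop.trans (measure_mono fun x hx => hs.2.trans_lt hx)
    _ ≤ lorentzNorm μ q V := lintegral_mono_set Set.Ioc_subset_Ioi_self

variable [MeasurableSpace F] [OpensMeasurableSpace F]

namespace HasMarcinkiewiczBound

lemma zero : HasMarcinkiewiczBound μ q 0 M := fun _ _ => by simp

lemma mono (h : HasMarcinkiewiczBound μ q f M) (hMN : M ≤ N) : HasMarcinkiewiczBound μ q f N :=
  fun B hB => (h B hB).trans (by gcongr)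

lemma add (hf : Measurable f) (hfM : HasMarcinkiewiczBound μ q f M)
    (hgN : HasMarcinkiewiczBound μ q g N) :
    HasMarcinkiewiczBound μ q (fun x => f x + g x) (M + N) := fun B hB => by
  rw [lintegral_add_left hf, add_mul]
  exact add_le_add (hfM B hB) (hgN B hB)

lemma const_mul (hf : Measurable f) (hfM : HasMarcinkiewiczBound μ q f M) (c : ℝ≥0∞) :
    HasMarcinkiewiczBound μ q (fun x => c * f x) (c * M) := fun B hB => by
  rw [lintegral_const_mul c hf, mul_assoc]
  gcongr
  exact hfM B hB

lemma lintegral [SFinite μ] {Y : Type*} [MeasurableSpace Y] {ν : Measure Y} [SFinite ν]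
    {k : X → Y → ℝ≥0∞} {N : Y → ℝ≥0∞} (hk : Measurable (Function.uncurry k)) (hN : Measurable N)
    (h : ∀ y, HasMarcinkiewiczBound μ q (fun x => k x y) (N y)) :
    HasMarcinkiewiczBound μ q (fun x => ∫⁻ y, k x y ∂ν) (∫⁻ y, N y ∂ν) := fun B hB =>
  calc ∫⁻ x in B, ∫⁻ y, k x y ∂ν ∂μ
      = ∫⁻ y, ∫⁻ x in B, k x y ∂μ ∂ν := lintegral_lintegral_swap hk.aemeasurable
    _ ≤ ∫⁻ y, N y * μ B ^ q⁻¹ ∂ν := lintegral_mono fun y => h y B hB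
    _ = (∫⁻ y, N y ∂ν) * μ B ^ q⁻¹ := lintegral_mul_const _ hN

lemma of_tendsto_zero (hq : 0 < q) (hM : M ≠ 0) {c : ℕ → ℝ≥0∞}
    (hc : Tendsto c atTop (𝓝 0))
    (h : ∀ n, ∃ g, Measurable g ∧ HasMarcinkiewiczBound μ q g M ∧ ∀ᵐ x ∂μ, f x ≤ g x + c n) :
    HasMarcinkiewiczBound μ q f M := fun B hB => by
  rcases eq_or_ne (μ B) ⊤ with hB_top | hB_top
  · simp [hB_top, ENNReal.top_rpow_of_pos (inv_pos.mpr hq), ENNReal.mul_top hM]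
  have hlim : Tendsto (fun n => M * μ B ^ q⁻¹ + c n * μ B) atTop (𝓝 (M * μ B ^ q⁻¹)) := by
    simpa using (ENNReal.Tendsto.mul_const hc (Or.inr hB_top)).const_add (M * μ B ^ q⁻¹)
  refine ge_of_tendsto' hlim fun n => ?_
  obtain ⟨g, hg, hgM, hfg⟩ := h n
  calc ∫⁻ x in B, f x ∂μ
      ≤ ∫⁻ x in B, (g x + c n) ∂μ := lintegral_mono_ae (ae_restrict_of_ae hfg)
    _ = ∫⁻ x in B, g x ∂μ + c n * μ B := by rw [lintegral_add_left hg, setLIntegral_const]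
    _ ≤ M * μ B ^ q⁻¹ + c n * μ B := by gcongr; exact hgM B hB

/-- The layer-cake formula for the measure with density `f` reduces the pairing of `V` and `f` to
integrals of `f` over the superlevel sets of `V`. -/
lemma lintegral_enorm_mul_le (hq : 0 < q) (hf : Measurable f)
    (hV : Measurable V) (hfM : HasMarcinkiewiczBound μ q f M) :
    ∫⁻ x, ‖V x‖ₑ * f x ∂μ ≤ M * lorentzNorm μ q V := by
  have hlevel (t : ℝ) : MeasurableSet {x | t < ‖V x‖} := measurableSet_lt measurable_const hV.norm
  calc ∫⁻ x, ‖V x‖ₑ * f x ∂μ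
      = ∫⁻ x, ENNReal.ofReal ‖V x‖ ∂μ.withDensity f := by
        simp only [ofReal_norm, lintegral_withDensity_eq_lintegral_mul _ hf hV.enorm,
          Pi.mul_apply, mul_comm]
    _ = ∫⁻ t in Set.Ioi 0, ∫⁻ x in {x | t < ‖V x‖}, f x ∂μ := by
        rw [lintegral_eq_lintegral_meas_lt _ (.of_forall fun x => norm_nonneg _)
          hV.norm.aemeasurable]
        simp only [withDensity_apply _ (hlevel _)]
    _ ≤ ∫⁻ t in Set.Ioi 0, M * μ {x | t < ‖V x‖} ^ q⁻¹ := lintegral_mono fun t => hfM _ (hlevel t)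
    _ = M * lorentzNorm μ q V := lintegral_const_mul _ (antitone_distribution_rpow hq V).measurable

end HasMarcinkiewiczBound

section WeakLp

lemma weakLpNorm_le_of_hasMarcinkiewiczBound [SigmaFinite μ]
    (hpq : p.HolderConjugate q) {f : X → F} (hf : Measurable f)
    (hfM : HasMarcinkiewiczBound μ q (fun x => ‖f x‖ₑ) M) : weakLpNorm μ p f ≤ M := by
  refine (weakLpNorm_le_iff hpq.pos).mpr fun t ht => le_of_forall_lt fun r hr => ?_
  obtain ⟨B, hB, hBt, hrB, hB_top⟩ := Measure.exists_subset_measure_lt_top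
    (measurableSet_lt measurable_const hf.norm) hr
  refine hrB.trans_le ?_
  have hB_zero : μ B ≠ 0 := hrB.ne_bot
  have hchebyshev : ENNReal.ofReal t * μ B ≤ M * μ B ^ q⁻¹ := by
    rw [← setLIntegral_const]
    refine (setLIntegral_mono' hB fun x hx => ?_).trans (hfM B hB)
    rw [← ofReal_norm]
    exact ENNReal.ofReal_le_ofReal (hBt hx).le
  have hsplit : μ B = μ B ^ p⁻¹ * μ B ^ q⁻¹ := by
    rw [← ENNReal.rpow_add _ _ hB_zero hB_top.ne, hpq.inv_add_inv_eq_one, ENNReal.rpow_one]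
  rw [← ENNReal.rpow_inv_le_iff hpq.pos, ENNReal.le_div_iff_mul_le (by simp [ht]) (by simp),
    mul_comm]
  nth_rewrite 1 [hsplit] at hchebyshev
  rw [← mul_assoc] at hchebyshev
  refine (ENNReal.mul_le_mul_iff_left ?_ ?_).mp hchebyshev <;> simp [hB_zero, hB_top.ne]

lemma setLIntegral_enorm_le_of_weakLpNorm_le (hp : 1 < p) {f : X → F}
    (hf : Measurable f) {A s : ℝ} (hA : 0 ≤ A) (hfA : weakLpNorm μ p f ≤ ENNReal.ofReal A)
    (hs : 0 < s) (B : Set X) :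
    ∫⁻ x in B, ‖f x‖ₑ ∂μ ≤
      ENNReal.ofReal s * μ B + ENNReal.ofReal (A ^ p * (s ^ (1 - p) / (p - 1))) := by
  have hlow : ∫⁻ t in Set.Ioc 0 s, (μ.restrict B) {x | t < ‖f x‖} ≤ ENNReal.ofReal s * μ B :=
    calc ∫⁻ t in Set.Ioc 0 s, (μ.restrict B) {x | t < ‖f x‖}
        ≤ ∫⁻ _ in Set.Ioc 0 s, μ B := lintegral_mono fun _ =>
          (measure_mono (Set.subset_univ _)).trans_eq (Measure.restrict_apply_univ B)
      _ = ENNReal.ofReal s * μ B := by simp [mul_comm]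
  have hdist (t : ℝ) (ht : t ∈ Set.Ioi s) :
      (μ.restrict B) {x | t < ‖f x‖} ≤ ENNReal.ofReal (A ^ p * t ^ (-p)) := by
    have ht_pos : 0 < t := hs.trans ht
    calc (μ.restrict B) {x | t < ‖f x‖} ≤ μ {x | t < ‖f x‖} := Measure.restrict_apply_le _ _
      _ ≤ (ENNReal.ofReal A / ENNReal.ofReal t) ^ p :=
        (weakLpNorm_le_iff (by positivity)).mp hfA t ht_pos
      _ = ENNReal.ofReal (A ^ p * t ^ (-p)) := by
        rw [← ENNReal.ofReal_div_of_pos ht_pos,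
          ENNReal.ofReal_rpow_of_nonneg (by positivity) (by positivity),
          Real.div_rpow hA ht_pos.le, Real.rpow_neg ht_pos.le, div_eq_mul_inv]
  have hhigh : ∫⁻ t in Set.Ioi s, (μ.restrict B) {x | t < ‖f x‖} ≤
      ENNReal.ofReal (A ^ p * (s ^ (1 - p) / (p - 1))) := by
    have hint : IntegrableOn (fun t : ℝ => A ^ p * t ^ (-p)) (Set.Ioi s) :=
      (integrableOn_Ioi_rpow_of_lt (by linarith) hs).const_mul _
    refine (setLIntegral_mono' measurableSet_Ioi hdist).trans_eq ?_
    rw [← ofReal_integral_eq_lintegral_ofReal hint, integral_const_mul,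
      integral_Ioi_rpow_of_lt (by linarith) hs]
    · congr 2
      rw [show -p + 1 = -(p - 1) by ring, neg_div_neg_eq, neg_sub]
    · filter_upwards [ae_restrict_mem measurableSet_Ioi] with t ht
      have : 0 < t := hs.trans ht
      positivity
  simp only [← ofReal_norm]
  rw [lintegral_eq_lintegral_meas_lt _ (.of_forall fun x => norm_nonneg _) hf.norm.aemeasurable,
    ← Set.Ioc_union_Ioi_eq_Ioi hs.le]
  exact (lintegral_union_le _ _ _).trans (add_le_add hlow hhigh)

lemma hasMarcinkiewiczBound_of_weakLpNorm_le (hpq : p.HolderConjugate q)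
    {f : X → F} (hf : Measurable f) {A : ℝ} (hA : 0 < A)
    (hfA : weakLpNorm μ p f ≤ ENNReal.ofReal A) :
    HasMarcinkiewiczBound μ q (fun x => ‖f x‖ₑ) (ENNReal.ofReal (q * A)) := fun B _ => by
  have hq := hpq.symm.pos
  rcases eq_or_ne (μ B) 0 with hB_zero | hB_zero
  · simp [Measure.restrict_eq_zero.mpr hB_zero]
  rcases eq_or_ne (μ B) ⊤ with hB_top | hB_top
  · simp [hB_top, ENNReal.top_rpow_of_pos (inv_pos.mpr hq), hA, hq]
  obtain ⟨b, hb, hbB⟩ : ∃ b : ℝ, 0 < b ∧ ENNReal.ofReal b = μ B :=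
    ⟨(μ B).toReal, ENNReal.toReal_pos hB_zero hB_top, ENNReal.ofReal_toReal hB_top⟩
  -- The level `s = A b ^ (-1/p)`, where `(A / s) ^ p = b`, balances the two terms.
  refine (setLIntegral_enorm_le_of_weakLpNorm_le hpq.lt hf hA.le hfA
    (s := A * b ^ (-p⁻¹)) (by positivity) B).trans_eq ?_
  rw [← hbB, ENNReal.ofReal_rpow_of_pos hb, ← ENNReal.ofReal_mul (by positivity),
    ← ENNReal.ofReal_mul (by positivity),
    ← ENNReal.ofReal_add (by positivity) (by have := hpq.sub_one_pos; positivity)]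
  congr 1
  have hbalance : A ^ p * (A * b ^ (-p⁻¹)) ^ (1 - p) = A * b ^ q⁻¹ := by
    rw [Real.mul_rpow hA.le (by positivity), ← mul_assoc, ← Real.rpow_add hA, ← Real.rpow_mul hb.le,
      add_sub_cancel, Real.rpow_one]
    congr 2
    rw [← hpq.one_sub_inv]
    field_simp [hpq.ne_zero]
    ring
  have hlow : A * b ^ (-p⁻¹) * b = A * b ^ q⁻¹ := by
    rw [mul_assoc, ← Real.rpow_add_one hb.ne', neg_add_eq_sub, hpq.one_sub_inv]
  rw [hlow, ← mul_div_assoc, hbalance, hpq.conjugate_eq]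
  field_simp [hpq.sub_one_ne_zero]
  ring

end WeakLp

section RieszKernel

variable {E : Type*} [NormedAddCommGroup E] [NormedSpace ℝ E] [FiniteDimensional ℝ E]
  [Nontrivial E] [MeasurableSpace E] [BorelSpace E] (ν : Measure E) [ν.IsAddHaarMeasure]

lemma weakLpNorm_rieszKernel_le (hp : 0 < p) (x : E) :
    weakLpNorm ν p (fun y => ‖x - y‖ ^ (-(finrank ℝ E / p))) ≤ ν (Metric.ball 0 1) ^ p⁻¹ := by
  have hd : 0 < (finrank ℝ E : ℝ) := by exact_mod_cast finrank_pos
  refine (weakLpNorm_le_iff hp).mpr fun t ht => ?_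
  have hball : {y | t < ‖‖x - y‖ ^ (-(finrank ℝ E / p))‖} ⊆
      Metric.ball x (t ^ (-(p / finrank ℝ E))) := fun y hy => by
    have hy' : t < ‖x - y‖ ^ (-(finrank ℝ E / p)) := by
      rwa [Set.mem_ofPred_eq, Real.norm_of_nonneg (by positivity)] at hy
    have hxy : 0 < ‖x - y‖ := by
      refine (norm_nonneg _).lt_of_ne' fun h => ?_
      rw [h, Real.zero_rpow (neg_ne_zero.mpr (by positivity))] at hy'
      exact ht.not_gt hy'
    rw [Metric.mem_ball, dist_comm, dist_eq_norm, ← inv_div, ← inv_neg]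
    exact (Real.lt_rpow_inv_iff_of_neg hxy ht (neg_neg_of_pos (by positivity))).mpr hy'
  refine (measure_mono hball).trans_eq ?_
  rw [Measure.addHaar_ball _ _ (by positivity), ENNReal.div_rpow_of_nonneg _ _ hp.le,
    ENNReal.rpow_inv_rpow hp.ne', ENNReal.ofReal_rpow_of_pos ht, ← Real.rpow_mul_natCast ht.le,
    neg_mul, div_mul_cancel₀ _ hd.ne', Real.rpow_neg ht.le,
    ENNReal.ofReal_inv_of_pos (by positivity), mul_comm, div_eq_mul_inv]

lemma hasMarcinkiewiczBound_rieszKernel (hpq : p.HolderConjugate q) (x : E) :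
    HasMarcinkiewiczBound ν q (fun y => ‖‖x - y‖ ^ (-(finrank ℝ E / p))‖ₑ)
      (ENNReal.ofReal (q * (ν (Metric.ball 0 1) ^ p⁻¹).toReal)) := by
  have hball : ν (Metric.ball 0 1) ^ p⁻¹ ≠ ⊤ :=
    ENNReal.rpow_ne_top_of_nonneg hpq.inv_nonneg measure_ball_lt_top.ne
  have hball_pos : 0 < ν (Metric.ball 0 1) ^ p⁻¹ :=
    ENNReal.rpow_pos (Metric.measure_ball_pos ν 0 one_pos) measure_ball_lt_top.ne
  refine hasMarcinkiewiczBound_of_weakLpNorm_le hpq (by fun_prop)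
    (ENNReal.toReal_pos hball_pos.ne' hball) ?_
  rw [ENNReal.ofReal_toReal hball]
  exact weakLpNorm_rieszKernel_le ν hpq.pos x

end RieszKernel

section Truncation

lemma tendsto_measure_natCast_add_one_lt_norm (hq : 0 < q) (hV : Measurable V)
    (hVq : lorentzNorm μ q V < ⊤) :
    Tendsto (fun n : ℕ => μ {x | (n + 1 : ℝ) < ‖V x‖}) atTop (𝓝 0) := by
  have hempty : ⋂ n : ℕ, {x | (n + 1 : ℝ) < ‖V x‖} = ∅ := by
    refine Set.eq_empty_of_forall_notMem fun x hx => ?_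
    obtain ⟨n, hn⟩ := exists_nat_ge ‖V x‖
    have : (n + 1 : ℝ) < ‖V x‖ := Set.mem_iInter.mp hx n
    linarith
  rw [← measure_empty (μ := μ), ← hempty]
  refine tendsto_measure_iInter_atTop
    (fun n => (measurableSet_lt measurable_const hV.norm).nullMeasurableSet)
    (fun m n hmn x (hx : (n + 1 : ℝ) < ‖V x‖) => lt_of_le_of_lt (by gcongr) hx)
    ⟨0, (measure_lt_norm_lt_top_of_lorentzNorm_lt_top hq hVq (by positivity)).ne⟩

/-- Dominated convergence, applied to the distribution functions. -/
lemma tendsto_lorentzNorm_indicator_compl (hq : 0 < q) (hV : Measurable V)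
    (hVq : lorentzNorm μ q V < ⊤) :
    Tendsto (fun n : ℕ => lorentzNorm μ q
      ({x | ‖V x‖ ∈ Set.Ioc (n + 1 : ℝ)⁻¹ (n + 1)}ᶜ.indicator V)) atTop (𝓝 0) := by
  rw [← lintegral_zero (μ := volume.restrict (Set.Ioi (0 : ℝ)))]
  refine tendsto_lintegral_of_dominated_convergence (fun t => μ {x | t < ‖V x‖} ^ q⁻¹)
    (fun n => (antitone_distribution_rpow hq _).measurable) (fun n => .of_forall fun t => ?_)
    hVq.ne ?_
  · exact ENNReal.rpow_le_rpow
      (measure_mono fun x hx => hx.trans_le (norm_indicator_le_norm_self _ _))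
      (inv_pos.mpr hq).le
  filter_upwards [ae_restrict_mem measurableSet_Ioi] with t ht
  have hlim := (tendsto_measure_natCast_add_one_lt_norm hq hV hVq).ennrpow_const q⁻¹
  rw [ENNReal.zero_rpow_of_pos (inv_pos.mpr hq)] at hlim
  have hsmall : ∀ᶠ n : ℕ in atTop, (n + 1 : ℝ)⁻¹ < t := by
    simpa using (tendsto_one_div_add_atTop_nhds_zero_nat (𝕜 := ℝ)).eventually_lt_const ht
  refine tendsto_of_tendsto_of_tendsto_of_le_of_le' tendsto_const_nhds hlim
    (.of_forall fun n => zero_le) ?_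
  filter_upwards [hsmall] with n hn
  refine ENNReal.rpow_le_rpow (measure_mono fun x hx => ?_) (inv_pos.mpr hq).le
  have hxJ : ‖V x‖ ∉ Set.Ioc (n + 1 : ℝ)⁻¹ (n + 1) := fun hmem => by
    have : t < 0 := by simpa [hmem.1, hmem.2] using hx
    exact this.not_gt ht
  have htx : t < ‖V x‖ := hx.trans_le (norm_indicator_le_norm_self _ _)
  exact not_le.mp fun hle => hxJ ⟨hn.trans htx, hle⟩

lemma exists_lintegral_lt_top_lorentzNorm_indicator_compl_le (hq : 0 < q)
    (hV : Measurable V) (hVq : lorentzNorm μ q V < ⊤) {ε : ℝ≥0∞} (hε : 0 < ε) :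
    ∃ J, MeasurableSet J ∧ ∫⁻ x, ‖J.indicator V x‖ₑ ∂μ < ⊤ ∧
      lorentzNorm μ q (Jᶜ.indicator V) ≤ ε := by
  obtain ⟨n, hn⟩ :=
    ((tendsto_lorentzNorm_indicator_compl hq hV hVq).eventually (ge_mem_nhds hε)).exists
  have hJ : MeasurableSet {x | ‖V x‖ ∈ Set.Ioc (n + 1 : ℝ)⁻¹ (n + 1)} := hV.norm measurableSet_Ioc
  refine ⟨_, hJ, ?_, hn⟩
  simp only [enorm_indicator_eq_indicator_enorm, lintegral_indicator hJ]
  calc ∫⁻ x in {x | ‖V x‖ ∈ Set.Ioc (n + 1 : ℝ)⁻¹ (n + 1)}, ‖V x‖ₑ ∂μ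
      ≤ ∫⁻ _ in {x | ‖V x‖ ∈ Set.Ioc (n + 1 : ℝ)⁻¹ (n + 1)}, ENNReal.ofReal (n + 1) ∂μ := by
        refine setLIntegral_mono' hJ fun x hx => ?_
        rw [← ofReal_norm]
        exact ENNReal.ofReal_le_ofReal hx.2
    _ = ENNReal.ofReal (n + 1) * μ {x | ‖V x‖ ∈ Set.Ioc (n + 1 : ℝ)⁻¹ (n + 1)} :=
        setLIntegral_const _ _
    _ < ⊤ := ENNReal.mul_lt_top ENNReal.ofReal_lt_top <| (measure_mono fun x hx => hx.1).trans_lt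
        (measure_lt_norm_lt_top_of_lorentzNorm_lt_top hq hVq (by positivity))

end Truncation

section Potential

variable {k : X → X → ℝ≥0∞} {A C : ℝ≥0∞}

lemma weightedPotential_eq_indicator_add_compl (hk : Measurable (Function.uncurry k))
    (hV : Measurable V) (hf : Measurable f) {J : Set X} (hJ : MeasurableSet J) (x : X) :
    weightedPotential μ k V f x =
      weightedPotential μ k (J.indicator V) f x + weightedPotential μ k (Jᶜ.indicator V) f x := by
  have hmeas : Measurable fun y => ‖J.indicator V y‖ₑ * f y * k x y :=
    ((hV.indicator hJ).enorm.mul hf).mul hk.of_uncurry_left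
  unfold weightedPotential
  rw [← lintegral_add_left hmeas]
  simp only [← add_mul, enorm_indicator_eq_indicator_enorm, Set.indicator_self_add_compl_apply]

lemma weightedPotential_le_add_const (hk : Measurable (Function.uncurry k)) (hV : Measurable V)
    (hg : Measurable g) (hfg : ∀ᵐ x ∂μ, f x ≤ g x + C) (x : X) :
    weightedPotential μ k V f x ≤
      weightedPotential μ k V g x + C * ∫⁻ y, ‖V y‖ₑ * k x y ∂μ := by
  have hVgk : Measurable fun y => ‖V y‖ₑ * g y * k x y :=
    (hV.enorm.mul hg).mul hk.of_uncurry_left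
  have hVk : Measurable fun y => ‖V y‖ₑ * k x y := hV.enorm.mul hk.of_uncurry_left
  calc ∫⁻ y, ‖V y‖ₑ * f y * k x y ∂μ
      ≤ ∫⁻ y, (‖V y‖ₑ * g y * k x y + C * (‖V y‖ₑ * k x y)) ∂μ := by
        refine lintegral_mono_ae ?_
        filter_upwards [hfg] with y hy
        calc ‖V y‖ₑ * f y * k x y ≤ ‖V y‖ₑ * (g y + C) * k x y := by gcongr
          _ = ‖V y‖ₑ * g y * k x y + C * (‖V y‖ₑ * k x y) := by ring
    _ = ∫⁻ y, ‖V y‖ₑ * g y * k x y ∂μ + C * ∫⁻ y, ‖V y‖ₑ * k x y ∂μ := by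
        rw [lintegral_add_left hVgk, lintegral_const_mul _ hVk]

variable [SFinite μ]

lemma measurable_weightedPotential (hk : Measurable (Function.uncurry k)) (hV : Measurable V)
    (hf : Measurable f) : Measurable (weightedPotential μ k V f) :=
  Measurable.lintegral_prod_right' (((hV.enorm.mul hf).comp measurable_snd).mul hk)

lemma hasMarcinkiewiczBound_weightedPotential (hk : Measurable (Function.uncurry k))
    (hkA : ∀ y, HasMarcinkiewiczBound μ q (fun x => k x y) A) (hV : Measurable V)
    (hf : Measurable f) :
    HasMarcinkiewiczBound μ q (weightedPotential μ k V f) ((∫⁻ y, ‖V y‖ₑ * f y ∂μ) * A) := by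
  have hVf : Measurable fun y => ‖V y‖ₑ * f y := hV.enorm.mul hf
  rw [← lintegral_mul_const A hVf]
  exact HasMarcinkiewiczBound.lintegral ((hVf.comp measurable_snd).mul hk) (hVf.mul_const A)
    fun y => (hkA y).const_mul hk.of_uncurry_right _

/-- One step of the Neumann iteration: substituting `f ≤ h + c` into the right-hand side of
`f ≤ g + T f` halves the constant. -/
lemma exists_hasMarcinkiewiczBound_le_add_const_mul_inv_two_pow (hq : 0 < q)
    (hk : Measurable (Function.uncurry k)) (hk_left : ∀ x, HasMarcinkiewiczBound μ q (k x) A)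
    (hk_right : ∀ y, HasMarcinkiewiczBound μ q (fun x => k x y) A) (hV : Measurable V)
    (hAV : A * lorentzNorm μ q V ≤ 2⁻¹) (hg : Measurable g) (hgM : HasMarcinkiewiczBound μ q g M)
    (hfC : ∀ᵐ x ∂μ, f x ≤ C) (hfg : ∀ᵐ x ∂μ, f x ≤ g x + weightedPotential μ k V f x) (n : ℕ) :
    ∃ h, Measurable h ∧ HasMarcinkiewiczBound μ q h (2 * M) ∧
      ∀ᵐ x ∂μ, f x ≤ h x + C * 2⁻¹ ^ n := by
  induction n with
  | zero => exact ⟨0, measurable_zero, .zero, by simpa using hfC⟩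
  | succ n ih =>
    obtain ⟨h, hh, hhM, hfh⟩ := ih
    refine ⟨fun x => g x + weightedPotential μ k V h x,
      hg.add (measurable_weightedPotential hk hV hh), ?_, ?_⟩
    · have hVh : (∫⁻ y, ‖V y‖ₑ * h y ∂μ) * A ≤ M :=
        calc (∫⁻ y, ‖V y‖ₑ * h y ∂μ) * A
            ≤ 2 * M * lorentzNorm μ q V * A := by
              gcongr
              exact hhM.lintegral_enorm_mul_le hq hh hV
          _ = M * 2 * (A * lorentzNorm μ q V) := by ring
          _ ≤ M * 2 * 2⁻¹ := by gcongr
          _ = M := by rw [mul_assoc, ENNReal.mul_inv_cancel (by simp) (by simp), mul_one]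
      rw [two_mul]
      exact .add hg hgM ((hasMarcinkiewiczBound_weightedPotential hk hk_right hV hh).mono hVh)
    · filter_upwards [hfg] with x hx
      calc f x ≤ g x + weightedPotential μ k V f x := hx
        _ ≤ g x + (weightedPotential μ k V h x + C * 2⁻¹ ^ n * ∫⁻ y, ‖V y‖ₑ * k x y ∂μ) := by
          gcongr
          exact weightedPotential_le_add_const hk hV hh hfh x
        _ ≤ g x + (weightedPotential μ k V h x + C * 2⁻¹ ^ n * 2⁻¹) := by
          gcongr
          exact ((hk_left x).lintegral_enorm_mul_le hq hk.of_uncurry_left hV).trans hAV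
        _ = g x + weightedPotential μ k V h x + C * 2⁻¹ ^ (n + 1) := by ring

lemma hasMarcinkiewiczBound_of_le_add_weightedPotential (hq : 0 < q)
    (hk : Measurable (Function.uncurry k)) (hk_left : ∀ x, HasMarcinkiewiczBound μ q (k x) A)
    (hk_right : ∀ y, HasMarcinkiewiczBound μ q (fun x => k x y) A) (hV : Measurable V)
    (hAV : A * lorentzNorm μ q V ≤ 2⁻¹) (hg : Measurable g) (hgM : HasMarcinkiewiczBound μ q g M)
    (hM : M ≠ 0) (hC : C ≠ ⊤) (hfC : ∀ᵐ x ∂μ, f x ≤ C)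
    (hfg : ∀ᵐ x ∂μ, f x ≤ g x + weightedPotential μ k V f x) :
    HasMarcinkiewiczBound μ q f (2 * M) := by
  have hlim : Tendsto (fun n : ℕ => C * 2⁻¹ ^ n) atTop (𝓝 0) := by
    simpa using ENNReal.Tendsto.const_mul
      (ENNReal.tendsto_pow_atTop_nhds_zero_of_lt_one (r := 2⁻¹) (by simp)) (Or.inr hC)
  exact .of_tendsto_zero hq (mul_ne_zero two_ne_zero hM) hlim fun n =>
    exists_hasMarcinkiewiczBound_le_add_const_mul_inv_two_pow hq hk hk_left hk_right hV hAV hg hgM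
      hfC hfg n

theorem exists_hasMarcinkiewiczBound_of_le_weightedPotential (hq : 0 < q)
    (hk : Measurable (Function.uncurry k)) (hA : A ≠ ⊤)
    (hk_left : ∀ x, HasMarcinkiewiczBound μ q (k x) A)
    (hk_right : ∀ y, HasMarcinkiewiczBound μ q (fun x => k x y) A) (hV : Measurable V)
    (hVq : lorentzNorm μ q V < ⊤) (hf : Measurable f) (hC : C ≠ ⊤) (hfC : ∀ᵐ x ∂μ, f x ≤ C)
    (hfV : ∀ᵐ x ∂μ, f x ≤ weightedPotential μ k V f x) :
    ∃ M ≠ ⊤, HasMarcinkiewiczBound μ q f M := by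
  obtain ⟨J, hJ, hJ_int, hJ_compl⟩ := exists_lintegral_lt_top_lorentzNorm_indicator_compl_le hq hV
    hVq (ε := 2⁻¹ / A) (ENNReal.div_pos (by simp) hA)
  have hVJ : Measurable (J.indicator V) := hV.indicator hJ
  have hJf : ∫⁻ y, ‖J.indicator V y‖ₑ * f y ∂μ ≠ ⊤ := by
    refine ne_top_of_le_ne_top (ENNReal.mul_ne_top hJ_int.ne hC) ?_
    rw [← lintegral_mul_const _ hVJ.enorm]
    refine lintegral_mono_ae ?_
    filter_upwards [hfC] with y hy
    gcongr
  set M := (∫⁻ y, ‖J.indicator V y‖ₑ * f y ∂μ) * A + 1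
  have hM : M ≠ ⊤ := ENNReal.add_ne_top.mpr ⟨ENNReal.mul_ne_top hJf hA, ENNReal.one_ne_top⟩
  have hJM : HasMarcinkiewiczBound μ q (weightedPotential μ k (J.indicator V) f) M :=
    (hasMarcinkiewiczBound_weightedPotential hk hk_right hVJ hf).mono le_self_add
  refine ⟨2 * M, ENNReal.mul_ne_top ENNReal.ofNat_ne_top hM,
    hasMarcinkiewiczBound_of_le_add_weightedPotential hq hk hk_left hk_right (hV.indicator hJ.compl)
      (ENNReal.mul_le_of_le_div' hJ_compl) (measurable_weightedPotential hk hVJ hf) hJM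
      (by simp [M]) hC hfC ?_⟩
  filter_upwards [hfV] with x hx
  exact hx.trans_eq (weightedPotential_eq_indicator_add_compl hk hV hf hJ x)

end Potential

section Resonance

theorem resonance_mem_weakL3_general {E G : Type*} [NormedAddCommGroup E] [NormedSpace ℝ E]
    [FiniteDimensional ℝ E] [Nontrivial E] [MeasurableSpace E] [BorelSpace E] {ν : Measure E}
    [ν.IsAddHaarMeasure] [NormedAddCommGroup G] [MeasurableSpace G] [OpensMeasurableSpace G]
    (hpq : p.HolderConjugate q) {V : E → F} (hV : Measurable V) (hVq : lorentzNorm ν q V < ⊤)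
    {φ : E → G} (hφ : Measurable φ) {C : ℝ} (hφC : ∀ᵐ x ∂ν, ‖φ x‖ ≤ C) {c : ℝ≥0∞} (hc : c ≠ ⊤)
    (hφV : ∀ᵐ x ∂ν, ‖φ x‖ₑ ≤
      c * ∫⁻ y, ‖V y‖ₑ * ‖φ y‖ₑ * ‖‖x - y‖ ^ (-(finrank ℝ E / p))‖ₑ ∂ν) :
    weakLpNorm ν p φ < ⊤ := by
  set k : E → E → ℝ≥0∞ := fun x y => c * ‖‖x - y‖ ^ (-(finrank ℝ E / p))‖ₑ with hk_def
  have hk : Measurable (Function.uncurry k) := by fun_prop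
  set A : ℝ≥0∞ := c * ENNReal.ofReal (q * (ν (Metric.ball 0 1) ^ p⁻¹).toReal)
  have hA : A ≠ ⊤ := ENNReal.mul_ne_top hc ENNReal.ofReal_ne_top
  have hk_left (x : E) : HasMarcinkiewiczBound ν q (k x) A :=
    (hasMarcinkiewiczBound_rieszKernel ν hpq x).const_mul (by fun_prop) c
  have hk_right (y : E) : HasMarcinkiewiczBound ν q (fun x => k x y) A := by
    simpa only [hk_def, norm_sub_rev y] using hk_left y
  have hφC_enorm : ∀ᵐ x ∂ν, ‖φ x‖ₑ ≤ ENNReal.ofReal C := by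
    filter_upwards [hφC] with x hx
    rw [← ofReal_norm]
    exact ENNReal.ofReal_le_ofReal hx
  have hφk : ∀ᵐ x ∂ν, ‖φ x‖ₑ ≤ weightedPotential ν k V (fun y => ‖φ y‖ₑ) x := by
    filter_upwards [hφV] with x hx
    simpa only [weightedPotential, hk_def, mul_left_comm _ c, lintegral_const_mul' c _ hc] using hx
  obtain ⟨M, hM, hφM⟩ := exists_hasMarcinkiewiczBound_of_le_weightedPotential hpq.symm.pos hk hA
    hk_left hk_right hV hVq hφ.enorm ENNReal.ofReal_ne_top hφC_enorm hφk
  exact (weakLpNorm_le_of_hasMarcinkiewiczBound hpq hφ hφM).trans_lt hM.lt_top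

lemma enorm_le_of_eq_const_mul_integral_div_norm {V : E3 → ℝ} {φ : E3 → ℂ} {c : ℂ} {x : E3}
    (h : φ x = c * ∫ y, (V y : ℂ) * φ y / (‖x - y‖ : ℂ)) :
    ‖φ x‖ₑ ≤ ‖c‖ₑ * ∫⁻ y, ‖V y‖ₑ * ‖φ y‖ₑ * ‖‖x - y‖ ^ (-(finrank ℝ E3 / 3 : ℝ))‖ₑ := by
  rw [h, enorm_mul]
  gcongr
  refine (enorm_integral_le_lintegral_enorm _).trans_eq (lintegral_congr fun y => ?_)
  rw [finrank_euclideanSpace_fin, Nat.cast_ofNat, div_self three_ne_zero, Real.rpow_neg_one,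
    div_eq_mul_inv, enorm_mul, enorm_mul, ← Complex.ofReal_inv]
  simp only [← ofReal_norm, Complex.norm_real]

end Resonance

/-- Lemma 2.1, forward direction: a bounded solution of `φ = -R₀(0)Vφ` lies in weak-`L³`. -/
theorem resonance_mem_weakL3 (V : E3 → ℝ) (hVmeas : Measurable V) (hV : MemL321 V)
    (φ : E3 → ℂ) (hφmeas : Measurable φ) (hφbdd : ∃ C : ℝ, ∀ᵐ x : E3 ∂volume, ‖φ x‖ ≤ C)
    (heq : ∀ᵐ x : E3 ∂volume,
      Integrable (fun y : E3 => (V y : ℂ) * φ y / (‖x - y‖ : ℂ)) volume ∧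
      φ x = -(1 / (4 * (Real.pi : ℂ))) * ∫ y : E3, (V y : ℂ) * φ y / (‖x - y‖ : ℂ)) :
    MemWeakL3 φ := by
  have hpq : Real.HolderConjugate 3 (3 / 2) := ⟨by norm_num, by norm_num, by norm_num⟩
  rw [MemL321, lorentzNorm321_eq] at hV
  rw [MemWeakL3, weakL3Norm_eq]
  obtain ⟨C, hC⟩ := hφbdd
  exact resonance_mem_weakL3_general hpq hVmeas hV hφmeas hC enorm_ne_top
    (heq.mono fun x hx => enorm_le_of_eq_const_mul_integral_div_norm hx.2)
end

section
/- Let V : ℝ³ → ℝ be measurable with V ∈ L^{3/2,1}(ℝ³), and let φ ∈ 𝓜, i.e. φ : ℝ³ → ℂ is essentially bounded and satisfies for a.e. x that y ↦ V(y)φ(y)/‖x−y‖ is integrable and φ(x) = −(1/(4π)) ∫_{ℝ³} V(y)φ(y)/‖x−y‖ dy. Then V·|φ|² is integrable, ∫_{ℝ³} V(x)|φ(x)|² dx ≤ 0, and if ∫_{ℝ³} V(x)|φ(x)|² dx = 0 then φ = 0 almost everywhere. -/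
open MeasureTheory ENNReal

/-
Off a suitable bounded set, on which `V` is bounded, the potential `∫ |V| / ‖x - y‖` is at most
`1 / 4`. Since `1 / (‖x - y‖ ‖y - z‖) ≤ (1 / ‖x - y‖ + 1 / ‖y - z‖) / ‖x - z‖` (the `3G`
inequality), the contribution of that far part of `V` to `|φ| ≤ ∫ |V φ| / ‖x - y‖` can be absorbed,
so `|φ|` is dominated by the potential of `|φ|` times a bounded function of bounded support. This
makes `V φ` integrable with bounded potential.

Inserting the equation then gives `∫ V |φ|² = -(1 / 4π) ∬ (V φ)(x) conj((V φ)(y)) / ‖x - y‖`. The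
Coulomb kernel is a superposition of products `g(x) g(y)` of Gaussians, so the double integral is an
integral of squares `|∫ g V φ|²`. If it vanishes, almost every Gaussian average of `V φ` vanishes,
hence so does the potential of `V φ`, which is a multiple of `φ`.
-/

open Filter Topology Module ComplexConjugate

section RieszKernel

variable {E : Type*} [NormedAddCommGroup E] [NormedSpace ℝ E] [FiniteDimensional ℝ E]
  [MeasurableSpace E] [BorelSpace E] {μ : Measure E} [μ.IsAddHaarMeasure] {s : ℝ}

theorem lintegral_ball_one_enorm_rpow_neg_lt_top [Nontrivial E] (hs : s < finrank ℝ E) :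
    ∫⁻ y in Metric.ball (0 : E) 1, ‖y‖ₑ ^ (-s) ∂μ < ⊤ := by
  have hd : 1 ≤ finrank ℝ E := finrank_pos
  have hrad : IntegrableOn (fun t : ℝ => t ^ (finrank ℝ E - 1) • t ^ (-s)) (Set.Ioo 0 1) := by
    refine ((intervalIntegral.integrableOn_Ioo_rpow_iff zero_lt_one).mpr
      (by linarith : -1 < (finrank ℝ E - 1 : ℝ) + -s)).congr_fun (fun t ht => ?_) measurableSet_Ioo
    beta_reduce
    rw [smul_eq_mul, Real.rpow_add ht.1, ← Nat.cast_pred hd, Real.rpow_natCast]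
  have hball := ((integrableOn_fun_norm_addHaar μ (f := fun t : ℝ => t ^ (-s))).mpr hrad).2
  rw [hasFiniteIntegral_iff_enorm] at hball
  refine (lintegral_congr_ae ?_).trans_lt hball
  filter_upwards [ae_restrict_of_ae (compl_mem_ae_iff.mpr (measure_singleton (0 : E)))] with y hy
  have hy0 : 0 < ‖y‖ := norm_pos_iff.mpr hy
  rw [← ofReal_norm y, ofReal_rpow_of_pos hy0, Real.enorm_of_nonneg (by positivity)]

theorem lintegral_ball_enorm_rpow_neg {r : ℝ} (hr : 0 < r) :
    ∫⁻ y in Metric.ball (0 : E) r, ‖y‖ₑ ^ (-s) ∂μ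
      = ENNReal.ofReal (r ^ (finrank ℝ E - s)) *
        ∫⁻ y in Metric.ball (0 : E) 1, ‖y‖ₑ ^ (-s) ∂μ := by
  have hscale : μ = ENNReal.ofReal (r ^ finrank ℝ E) • μ.map (r • ·) := by
    rw [Measure.map_addHaar_smul μ hr.ne', smul_smul, ← ofReal_mul (by positivity),
      abs_of_pos (by positivity), mul_inv_cancel₀ (by positivity), ofReal_one, one_smul]
  have hpre : (r • ·) ⁻¹' Metric.ball (0 : E) r = Metric.ball 0 1 := by
    ext y
    simp [norm_smul, abs_of_pos hr, hr]
  have hnorm (y : E) : ‖r • y‖ₑ ^ (-s) = ENNReal.ofReal (r ^ (-s)) * ‖y‖ₑ ^ (-s) := by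
    rw [enorm_smul, mul_rpow_of_ne_top enorm_ne_top enorm_ne_top, Real.enorm_of_nonneg hr.le,
      ofReal_rpow_of_pos hr]
  conv_lhs => rw [hscale]
  rw [Measure.restrict_smul, lintegral_smul_measure,
    setLIntegral_map measurableSet_ball (by fun_prop) (by fun_prop), hpre]
  simp_rw [hnorm]
  rw [lintegral_const_mul _ (by fun_prop), smul_eq_mul, ← mul_assoc, ← ofReal_mul (by positivity),
    sub_eq_add_neg, Real.rpow_add hr, Real.rpow_natCast]

theorem setLIntegral_enorm_sub_rpow_neg_le_add {r : ℝ} (hr : 0 < r) (hs : 0 ≤ s) (x : E)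
    (A : Set E) :
    ∫⁻ y in A, ‖x - y‖ₑ ^ (-s) ∂μ ≤ ENNReal.ofReal (r ^ (-s)) * μ A
      + ENNReal.ofReal (r ^ (finrank ℝ E - s)) *
        ∫⁻ y in Metric.ball (0 : E) 1, ‖y‖ₑ ^ (-s) ∂μ := by
  set near : E → ℝ≥0∞ := (Metric.ball 0 r).indicator fun y => ‖y‖ₑ ^ (-s)
  have hsplit (y : E) : ‖x - y‖ₑ ^ (-s) ≤ ENNReal.ofReal (r ^ (-s)) + near (x - y) := by
    by_cases hy : x - y ∈ Metric.ball (0 : E) r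
    · simp only [near, Set.indicator_of_mem hy, self_le_add_left]
    · refine le_add_right ?_
      rw [← ofReal_rpow_of_pos hr, ← ofReal_norm, rpow_neg, rpow_neg]
      gcongr
      simpa using hy
  calc ∫⁻ y in A, ‖x - y‖ₑ ^ (-s) ∂μ
      ≤ ∫⁻ y in A, (ENNReal.ofReal (r ^ (-s)) + near (x - y)) ∂μ := lintegral_mono hsplit
    _ ≤ ENNReal.ofReal (r ^ (-s)) * μ A + ∫⁻ y, near (x - y) ∂μ := by
      rw [lintegral_add_left measurable_const, setLIntegral_const]
      gcongr
      exact Measure.restrict_le_self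
    _ = _ := by
      rw [lintegral_sub_left_eq_self near, lintegral_indicator measurableSet_ball,
        lintegral_ball_enorm_rpow_neg hr]

theorem exists_setLIntegral_enorm_sub_rpow_neg_le [Nontrivial E] (hs : 0 ≤ s)
    (hsd : s < finrank ℝ E) :
    ∃ c : ℝ≥0∞, c ≠ ⊤ ∧ ∀ (x : E) (A : Set E),
      ∫⁻ y in A, ‖x - y‖ₑ ^ (-s) ∂μ ≤ c * μ A ^ (1 - s / finrank ℝ E) := by
  set I : ℝ≥0∞ := ∫⁻ y in Metric.ball (0 : E) 1, ‖y‖ₑ ^ (-s) ∂μ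
  have hI : I ≠ ⊤ := (lintegral_ball_one_enorm_rpow_neg_lt_top hsd).ne
  have hd : (0 : ℝ) < finrank ℝ E := by exact_mod_cast finrank_pos
  have hexp : 0 < 1 - s / finrank ℝ E := by rw [sub_pos, div_lt_one hd]; exact hsd
  refine ⟨1 + I, by simp [hI], fun x A => ?_⟩
  rcases eq_or_ne (μ A) 0 with hA0 | hA0
  · simp [Measure.restrict_eq_zero.mpr hA0]
  rcases eq_or_ne (μ A) ⊤ with hAtop | hAtop
  · simp [hAtop, top_rpow_of_pos hexp, mul_top]
  obtain ⟨a, ha, hAa⟩ : ∃ a : ℝ, 0 < a ∧ μ A = ENNReal.ofReal a :=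
    ⟨(μ A).toReal, toReal_pos hA0 hAtop, (ofReal_toReal hAtop).symm⟩
  -- The radius for which a ball has measure comparable to that of `A` balances the two terms.
  refine (setLIntegral_enorm_sub_rpow_neg_le_add
    (Real.rpow_pos_of_pos ha (1 / finrank ℝ E)) hs x A).trans_eq ?_
  rw [hAa, ← ofReal_mul (by positivity), ofReal_rpow_of_pos ha, add_mul, one_mul, mul_comm I,
    ← Real.rpow_mul ha.le, ← Real.rpow_mul ha.le]
  congr 3
  · nth_rw 2 [← Real.rpow_one a]
    rw [← Real.rpow_add ha]
    congr 1
    ring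
  · field_simp

end RieszKernel

section NewtonPotential

theorem inv_enorm_sub_mul_inv_enorm_sub_le {E : Type*} [NormedAddCommGroup E]
    (x y z : E) :
    ‖x - y‖ₑ⁻¹ * ‖y - z‖ₑ⁻¹ ≤ ‖x - z‖ₑ⁻¹ * (‖x - y‖ₑ⁻¹ + ‖y - z‖ₑ⁻¹) := by
  have inv_le_one (a b : E) : ‖a‖ₑ * (‖a‖ₑ⁻¹ * ‖b‖ₑ⁻¹) ≤ ‖b‖ₑ⁻¹ := by
    rw [← mul_assoc]
    exact mul_le_of_le_one_left' (ENNReal.mul_inv_le_one _)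
  rw [mul_comm ‖x - z‖ₑ⁻¹, ← div_eq_mul_inv _ ‖x - z‖ₑ,
    ENNReal.le_div_iff_mul_le (.inr (by simp)) (.inl enorm_ne_top)]
  calc ‖x - y‖ₑ⁻¹ * ‖y - z‖ₑ⁻¹ * ‖x - z‖ₑ
      ≤ ‖x - y‖ₑ⁻¹ * ‖y - z‖ₑ⁻¹ * (‖x - y‖ₑ + ‖y - z‖ₑ) := by
        gcongr
        simpa using enorm_add_le (x - y) (y - z)
    _ = ‖y - z‖ₑ * (‖y - z‖ₑ⁻¹ * ‖x - y‖ₑ⁻¹) + ‖x - y‖ₑ * (‖x - y‖ₑ⁻¹ * ‖y - z‖ₑ⁻¹) := by ring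
    _ ≤ ‖x - y‖ₑ⁻¹ + ‖y - z‖ₑ⁻¹ := add_le_add (inv_le_one _ _) (inv_le_one _ _)

variable {E : Type*} [NormedAddCommGroup E] [MeasurableSpace E] {μ : Measure E}
  {ρ ρ' v v₁ v₂ u : E → ℝ≥0∞} {x : E} {A : Set E}

/-- The Newtonian potential `∫ ρ(y) / ‖x - y‖ dμ(y)` of a nonnegative density `ρ`, without the
normalizing factor `1 / (4π)`. The kernel is infinite on the diagonal. -/
noncomputable def newtonPotential (μ : Measure E) (ρ : E → ℝ≥0∞) (x : E) : ℝ≥0∞ :=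
  ∫⁻ y, ρ y * ‖x - y‖ₑ⁻¹ ∂μ

theorem newtonPotential_mono_ae (h : ρ ≤ᵐ[μ] ρ') (x : E) :
    newtonPotential μ ρ x ≤ newtonPotential μ ρ' x :=
  lintegral_mono_ae <| h.mono fun y hy => by gcongr

variable [BorelSpace E]

theorem newtonPotential_add (hρ : Measurable ρ) (ρ' : E → ℝ≥0∞) (x : E) :
    newtonPotential μ (fun y => ρ y + ρ' y) x
      = newtonPotential μ ρ x + newtonPotential μ ρ' x := by
  simp only [newtonPotential, add_mul]
  exact lintegral_add_left (by fun_prop) _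

theorem newtonPotential_mul_eq_indicator_add_indicator_compl (hA : MeasurableSet A)
    (hv : Measurable v) (hu : Measurable u) (x : E) :
    newtonPotential μ (fun y => v y * u y) x
      = newtonPotential μ (fun y => A.indicator v y * u y) x
        + newtonPotential μ (fun y => Aᶜ.indicator v y * u y) x := by
  have hnear : Measurable fun y => A.indicator v y * u y := (hv.indicator hA).mul hu
  rw [← newtonPotential_add hnear]
  simp only [← add_mul, Set.indicator_self_add_compl_apply]

theorem newtonPotential_const_mul (c : ℝ≥0∞) (hρ : Measurable ρ) (x : E) :
    newtonPotential μ (fun y => c * ρ y) x = c * newtonPotential μ ρ x := by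
  simp only [newtonPotential, mul_assoc]
  exact lintegral_const_mul _ (by fun_prop)

theorem setLIntegral_closedBall_le_mul_newtonPotential (x : E) {r : ℝ} (hr : 0 < r) :
    ∫⁻ y in Metric.closedBall x r, ρ y ∂μ ≤ ENNReal.ofReal r * newtonPotential μ ρ x := by
  have one_le (y : E) (hy : y ∈ Metric.closedBall x r) : 1 ≤ ENNReal.ofReal r * ‖x - y‖ₑ⁻¹ := by
    have hxy : ‖x - y‖ₑ ≤ ENNReal.ofReal r := by
      rw [← ofReal_norm, ← dist_eq_norm']
      exact ofReal_le_ofReal hy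
    rw [← ENNReal.mul_inv_cancel (ofReal_pos.mpr hr).ne' ofReal_ne_top]
    gcongr
  rw [newtonPotential, ← lintegral_const_mul' _ _ ofReal_ne_top]
  refine (setLIntegral_mono' Metric.isClosed_closedBall.measurableSet fun y hy => ?_).trans
    (setLIntegral_le_lintegral _ _)
  rw [mul_left_comm]
  exact le_mul_of_one_le_right' (one_le y hy)

theorem setLIntegral_lt_top_of_newtonPotential_ne_top {s : Set E} (hs : Bornology.IsBounded s)
    (hx : newtonPotential μ ρ x ≠ ⊤) : ∫⁻ y in s, ρ y ∂μ < ⊤ := by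
  obtain ⟨r, hr, hsr⟩ := hs.subset_closedBall_lt 0 x
  calc ∫⁻ y in s, ρ y ∂μ ≤ ∫⁻ y in Metric.closedBall x r, ρ y ∂μ := lintegral_mono_set hsr
    _ ≤ ENNReal.ofReal r * newtonPotential μ ρ x :=
        setLIntegral_closedBall_le_mul_newtonPotential x hr
    _ < ⊤ := mul_lt_top ofReal_lt_top hx.lt_top

variable [SecondCountableTopology E] [SFinite μ]

theorem measurable_newtonPotential (hρ : Measurable ρ) : Measurable (newtonPotential μ ρ) :=
  Measurable.lintegral_prod_right' (f := fun p : E × E => ρ p.2 * ‖p.1 - p.2‖ₑ⁻¹) (by fun_prop)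

theorem lintegral_mul_newtonPotential_comm (hρ : Measurable ρ) (hv : Measurable v) :
    ∫⁻ x, v x * newtonPotential μ ρ x ∂μ = ∫⁻ y, ρ y * newtonPotential μ v y ∂μ := by
  calc ∫⁻ x, v x * newtonPotential μ ρ x ∂μ
      = ∫⁻ x, ∫⁻ y, v x * (ρ y * ‖x - y‖ₑ⁻¹) ∂μ ∂μ :=
        lintegral_congr fun x => (lintegral_const_mul _ (by fun_prop)).symm
    _ = ∫⁻ y, ∫⁻ x, v x * (ρ y * ‖x - y‖ₑ⁻¹) ∂μ ∂μ :=
        lintegral_lintegral_swap (by fun_prop)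
    _ = ∫⁻ y, ∫⁻ x, ρ y * (v x * ‖y - x‖ₑ⁻¹) ∂μ ∂μ := by
        simp only [mul_left_comm, enorm_sub_rev]
    _ = ∫⁻ y, ρ y * newtonPotential μ v y ∂μ :=
        lintegral_congr fun y => lintegral_const_mul _ (by fun_prop)

theorem newtonPotential_mul_newtonPotential (hv : Measurable v) (hρ : Measurable ρ) (x : E) :
    newtonPotential μ (fun y => v y * newtonPotential μ ρ y) x
      = ∫⁻ z, ρ z * ∫⁻ y, v y * (‖x - y‖ₑ⁻¹ * ‖y - z‖ₑ⁻¹) ∂μ ∂μ := by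
  have hvx : Measurable fun y => v y * ‖x - y‖ₑ⁻¹ := by fun_prop
  calc newtonPotential μ (fun y => v y * newtonPotential μ ρ y) x
      = ∫⁻ y, v y * ‖x - y‖ₑ⁻¹ * newtonPotential μ ρ y ∂μ :=
        lintegral_congr fun y => mul_right_comm _ _ _
    _ = ∫⁻ z, ρ z * newtonPotential μ (fun y => v y * ‖x - y‖ₑ⁻¹) z ∂μ :=
        lintegral_mul_newtonPotential_comm hρ hvx
    _ = _ := by
        simp only [newtonPotential, mul_assoc, enorm_sub_rev]

theorem newtonPotential_mul_newtonPotential_le {ε : ℝ≥0∞} (hv : Measurable v)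
    (hρ : Measurable ρ) (hε : ∀ z, newtonPotential μ v z ≤ ε) (x : E) :
    newtonPotential μ (fun y => v y * newtonPotential μ ρ y) x
      ≤ 2 * ε * newtonPotential μ ρ x := by
  have hinner (z : E) :
      ∫⁻ y, v y * (‖x - y‖ₑ⁻¹ * ‖y - z‖ₑ⁻¹) ∂μ ≤ ‖x - z‖ₑ⁻¹ * (2 * ε) := by
    calc ∫⁻ y, v y * (‖x - y‖ₑ⁻¹ * ‖y - z‖ₑ⁻¹) ∂μ
        ≤ ∫⁻ y, ‖x - z‖ₑ⁻¹ * (v y * ‖x - y‖ₑ⁻¹ + v y * ‖z - y‖ₑ⁻¹) ∂μ := by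
          refine lintegral_mono fun y => ?_
          rw [← mul_add, mul_left_comm ‖x - z‖ₑ⁻¹, enorm_sub_rev z y]
          exact mul_le_mul' le_rfl (inv_enorm_sub_mul_inv_enorm_sub_le x y z)
      _ = ‖x - z‖ₑ⁻¹ * (newtonPotential μ v x + newtonPotential μ v z) := by
          rw [lintegral_const_mul _ (by fun_prop), lintegral_add_left (by fun_prop)]
          rfl
      _ ≤ ‖x - z‖ₑ⁻¹ * (2 * ε) := by
          rw [two_mul]
          gcongr <;> apply hε
  calc newtonPotential μ (fun y => v y * newtonPotential μ ρ y) x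
      = ∫⁻ z, ρ z * ∫⁻ y, v y * (‖x - y‖ₑ⁻¹ * ‖y - z‖ₑ⁻¹) ∂μ ∂μ :=
        newtonPotential_mul_newtonPotential hv hρ x
    _ ≤ ∫⁻ z, 2 * ε * (ρ z * ‖x - z‖ₑ⁻¹) ∂μ := by
        refine lintegral_mono fun z => ?_
        rw [mul_comm (2 * ε), mul_assoc]
        gcongr
        exact hinner z
    _ = 2 * ε * newtonPotential μ ρ x := lintegral_const_mul _ (by fun_prop)

theorem newtonPotential_mul_newtonPotential_le_mul_lintegral {M : ℝ≥0∞} (hv : Measurable v)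
    (hρ : Measurable ρ) (hM : ∀ z, ∫⁻ y, v y * ‖z - y‖ₑ ^ (-2 : ℝ) ∂μ ≤ M) (x : E) :
    newtonPotential μ (fun y => v y * newtonPotential μ ρ y) x ≤ 2 * M * ∫⁻ z, ρ z ∂μ := by
  have hsq (a b : ℝ≥0∞) : a⁻¹ * b⁻¹ ≤ a ^ (-2 : ℝ) + b ^ (-2 : ℝ) := by
    simp only [rpow_neg, rpow_two, ENNReal.inv_pow]
    rcases le_total a⁻¹ b⁻¹ with h | h
    · exact le_add_left (by rw [sq]; gcongr)
    · exact le_add_right (by rw [sq]; gcongr)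
  rw [newtonPotential_mul_newtonPotential hv hρ, ← lintegral_const_mul _ hρ]
  refine lintegral_mono fun z => ?_
  rw [mul_comm (2 * M), two_mul]
  gcongr
  calc ∫⁻ y, v y * (‖x - y‖ₑ⁻¹ * ‖y - z‖ₑ⁻¹) ∂μ
      ≤ ∫⁻ y, (v y * ‖x - y‖ₑ ^ (-2 : ℝ) + v y * ‖z - y‖ₑ ^ (-2 : ℝ)) ∂μ := by
        refine lintegral_mono fun y => ?_
        rw [← mul_add, enorm_sub_rev y z]
        gcongr
        exact hsq _ _
    _ ≤ M + M := by
        rw [lintegral_add_left (by fun_prop)]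
        exact add_le_add (hM x) (hM z)

-- With `P` and `Q` the two potentials, `Q ≤ P / 2 + Q / 2` by the contraction property.
theorem newtonPotential_mul_le_of_small (hv₁ : Measurable v₁) (hv₂ : Measurable v₂)
    (hu : Measurable u) (hsmall : ∀ x, newtonPotential μ v₂ x ≤ 4⁻¹)
    (hle : ∀ᵐ x ∂μ, u x ≤ newtonPotential μ (fun y => v₁ y * u y) x
      + newtonPotential μ (fun y => v₂ y * u y) x)
    (hfin : newtonPotential μ (fun y => v₂ y * u y) x ≠ ⊤) :
    newtonPotential μ (fun y => v₂ y * u y) x ≤ newtonPotential μ (fun y => v₁ y * u y) x := by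
  set P := newtonPotential μ fun y => v₁ y * u y
  set Q := newtonPotential μ fun y => v₂ y * u y
  have hP : Measurable P := measurable_newtonPotential (by fun_prop)
  have half : (2 : ℝ≥0∞) * 4⁻¹ = 2⁻¹ := by
    rw [show (4 : ℝ≥0∞) = 2 * 2 by norm_num, ENNReal.mul_inv (by simp) (by simp), ← mul_assoc,
      ENNReal.mul_inv_cancel two_ne_zero ofNat_ne_top, one_mul]
  have hQ : Q x ≤ P x / 2 + Q x / 2 := by
    calc Q x ≤ newtonPotential μ (fun y => v₂ y * P y + v₂ y * Q y) x :=
          newtonPotential_mono_ae (hle.mono fun y hy => by rw [← mul_add]; gcongr) x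
      _ = newtonPotential μ (fun y => v₂ y * P y) x + newtonPotential μ (fun y => v₂ y * Q y) x :=
          newtonPotential_add (by fun_prop) _ x
      _ ≤ 2 * 4⁻¹ * P x + 2 * 4⁻¹ * Q x :=
          add_le_add (newtonPotential_mul_newtonPotential_le hv₂ (by fun_prop) hsmall x)
            (newtonPotential_mul_newtonPotential_le hv₂ (by fun_prop) hsmall x)
      _ = P x / 2 + Q x / 2 := by
          rw [half, ENNReal.div_eq_inv_mul, ENNReal.div_eq_inv_mul]
  have hhalves : Q x / 2 + Q x / 2 ≤ P x / 2 + Q x / 2 := by rwa [ENNReal.add_halves]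
  have hhalf : Q x / 2 ≤ P x / 2 :=
    (ENNReal.add_le_add_iff_right (div_ne_top hfin two_ne_zero)).mp hhalves
  rw [← ENNReal.add_halves (Q x), ← ENNReal.add_halves (P x)]
  exact add_le_add hhalf hhalf

theorem lintegral_mul_le_of_le_newtonPotential {ε : ℝ≥0∞} (hρ : Measurable ρ)
    (hv : Measurable v) (hε : ∀ z, newtonPotential μ v z ≤ ε)
    (hu : ∀ᵐ x ∂μ, u x ≤ newtonPotential μ ρ x) :
    ∫⁻ x, v x * u x ∂μ ≤ ε * ∫⁻ x, ρ x ∂μ := by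
  calc ∫⁻ x, v x * u x ∂μ ≤ ∫⁻ x, v x * newtonPotential μ ρ x ∂μ :=
        lintegral_mono_ae <| hu.mono fun x hx => by gcongr
    _ = ∫⁻ y, ρ y * newtonPotential μ v y ∂μ := lintegral_mul_newtonPotential_comm hρ hv
    _ ≤ ∫⁻ y, ε * ρ y ∂μ := lintegral_mono fun y => by
        rw [mul_comm ε]; gcongr; exact hε y
    _ = ε * ∫⁻ x, ρ x ∂μ := lintegral_const_mul _ hρ

theorem ae_newtonPotential_mul_le_two_mul_indicator (hA : MeasurableSet A) (hv : Measurable v)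
    (hu : Measurable u) (hsmall : ∀ x, newtonPotential μ (Aᶜ.indicator v) x ≤ 4⁻¹)
    (hle : ∀ᵐ x ∂μ, u x ≤ newtonPotential μ (fun y => v y * u y) x)
    (hfin : ∀ᵐ x ∂μ, newtonPotential μ (fun y => v y * u y) x < ⊤) :
    ∀ᵐ x ∂μ, newtonPotential μ (fun y => v y * u y) x
      ≤ 2 * newtonPotential μ (fun y => A.indicator v y * u y) x := by
  simp only [newtonPotential_mul_eq_indicator_add_indicator_compl hA hv hu] at hle hfin ⊢
  filter_upwards [hfin] with x hx
  rw [two_mul]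
  gcongr
  exact newtonPotential_mul_le_of_small (hv.indicator hA) (hv.indicator hA.compl) hu hsmall hle
    (add_lt_top.mp hx).2.ne

theorem lintegral_mul_lt_top_of_le_newtonPotential [NeZero μ] (hA : MeasurableSet A)
    (hAbdd : Bornology.IsBounded A) (hv : Measurable v) (hu : Measurable u)
    (hsmall : ∀ x, newtonPotential μ (Aᶜ.indicator v) x ≤ 4⁻¹)
    (hle : ∀ᵐ x ∂μ, u x ≤ newtonPotential μ (fun y => v y * u y) x)
    (hfin : ∀ᵐ x ∂μ, newtonPotential μ (fun y => v y * u y) x < ⊤) :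
    ∫⁻ y, v y * u y ∂μ < ⊤ := by
  have hmeas : Measurable fun y => A.indicator v y * u y := (hv.indicator hA).mul hu
  have hnear : ∫⁻ y, A.indicator v y * u y ∂μ < ⊤ := by
    obtain ⟨x, hx⟩ := hfin.exists
    simp only [← Set.indicator_mul_left]
    rw [lintegral_indicator hA]
    exact setLIntegral_lt_top_of_newtonPotential_ne_top hAbdd hx.ne
  have hfar : ∫⁻ y, Aᶜ.indicator v y * u y ∂μ
      ≤ 4⁻¹ * ∫⁻ y, 2 * (A.indicator v y * u y) ∂μ := by
    refine lintegral_mul_le_of_le_newtonPotential (hmeas.const_mul 2) (hv.indicator hA.compl)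
      hsmall ?_
    filter_upwards [hle, ae_newtonPotential_mul_le_two_mul_indicator hA hv hu hsmall hle hfin]
      with x hux hx
    rw [newtonPotential_const_mul _ hmeas]
    exact hux.trans hx
  rw [lintegral_const_mul _ hmeas] at hfar
  calc ∫⁻ y, v y * u y ∂μ
      = ∫⁻ y, A.indicator v y * u y ∂μ + ∫⁻ y, Aᶜ.indicator v y * u y ∂μ := by
        rw [← lintegral_add_left hmeas]
        simp only [← add_mul, Set.indicator_self_add_compl_apply]
    _ < ⊤ := add_lt_top.mpr ⟨hnear, hfar.trans_lt <|
        mul_lt_top (by simp) (mul_lt_top ofNat_lt_top hnear)⟩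

theorem ae_newtonPotential_mul_le_mul_lintegral {M : ℝ≥0∞} (hA : MeasurableSet A)
    (hv : Measurable v) (hu : Measurable u)
    (hsmall : ∀ x, newtonPotential μ (Aᶜ.indicator v) x ≤ 4⁻¹)
    (hM : ∀ z, ∫⁻ y in A, v y * ‖z - y‖ₑ ^ (-2 : ℝ) ∂μ ≤ M)
    (hle : ∀ᵐ x ∂μ, u x ≤ newtonPotential μ (fun y => v y * u y) x)
    (hfin : ∀ᵐ x ∂μ, newtonPotential μ (fun y => v y * u y) x < ⊤) :
    ∀ᵐ x ∂μ, newtonPotential μ (fun y => v y * u y) x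
      ≤ 8 * M * ∫⁻ y, v y * u y ∂μ := by
  have hvA := hv.indicator hA
  set ρ : E → ℝ≥0∞ := fun y => 2 * (A.indicator v y * u y)
  have hρ : Measurable ρ := (hvA.mul hu).const_mul 2
  have hMA (z : E) : ∫⁻ y, A.indicator v y * ‖z - y‖ₑ ^ (-2 : ℝ) ∂μ ≤ M := by
    refine (lintegral_congr fun y => ?_).trans_le ((lintegral_indicator hA _).trans_le (hM z))
    exact (Set.indicator_mul_left A v fun y => ‖z - y‖ₑ ^ (-2 : ℝ)).symm
  have hpot (x : E) :
      newtonPotential μ ρ x = 2 * newtonPotential μ (fun y => A.indicator v y * u y) x :=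
    newtonPotential_const_mul _ (by fun_prop) x
  have hle₂ := ae_newtonPotential_mul_le_two_mul_indicator hA hv hu hsmall hle hfin
  have hu_le : ∀ᵐ x ∂μ, u x ≤ newtonPotential μ ρ x := by
    filter_upwards [hle, hle₂] with x hux hx
    exact (hux.trans hx).trans_eq (hpot x).symm
  filter_upwards [hle₂] with x hx
  calc newtonPotential μ (fun y => v y * u y) x
      ≤ 2 * newtonPotential μ (fun y => A.indicator v y * u y) x := hx
    _ ≤ 2 * newtonPotential μ (fun y => A.indicator v y * newtonPotential μ ρ y) x := by
        gcongr
        exact newtonPotential_mono_ae (hu_le.mono fun y hy => by gcongr) x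
    _ ≤ 2 * (2 * M * ∫⁻ y, ρ y ∂μ) := by
        gcongr
        exact newtonPotential_mul_newtonPotential_le_mul_lintegral hvA hρ hMA x
    _ = 8 * M * ∫⁻ y, A.indicator v y * u y ∂μ := by
        rw [lintegral_const_mul _ (by fun_prop)]
        ring
    _ ≤ 8 * M * ∫⁻ y, v y * u y ∂μ := by
        gcongr
        exact Set.indicator_le_self _ _ _

end NewtonPotential

section LorentzSpace

variable {α : Type*} [NormedAddCommGroup α] {V : E3 → α}

theorem exists_newtonPotential_enorm_le_mul_lorentzNorm321 [MeasurableSpace α]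
    [OpensMeasurableSpace α] : ∃ c : ℝ≥0∞, c ≠ ⊤ ∧ ∀ V : E3 → α, Measurable V → ∀ x,
      newtonPotential volume (fun y => ‖V y‖ₑ) x ≤ c * lorentzNorm321 V := by
  obtain ⟨c, hc, hset⟩ := exists_setLIntegral_enorm_sub_rpow_neg_le (E := E3) (μ := volume)
    (s := 1) zero_le_one (by norm_num [finrank_euclideanSpace])
  refine ⟨c, hc, fun V hV x => ?_⟩
  set κ : Measure E3 := volume.withDensity fun y => ‖x - y‖ₑ⁻¹
  have hlevel (t : ℝ) : κ {y | t < ‖V y‖} ≤ c * volume {y | t < ‖V y‖} ^ ((2 : ℝ) / 3) := by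
    have h := hset x {y | t < ‖V y‖}
    rw [withDensity_apply _ (measurableSet_lt (by fun_prop) (by fun_prop))]
    norm_num [rpow_neg_one] at h
    exact h
  calc newtonPotential volume (fun y => ‖V y‖ₑ) x
      = ∫⁻ y, ENNReal.ofReal ‖V y‖ ∂κ := by
        rw [lintegral_withDensity_eq_lintegral_mul _ (by fun_prop) (by fun_prop)]
        simp only [newtonPotential, Pi.mul_apply, ofReal_norm, mul_comm]
    _ = ∫⁻ t in Set.Ioi 0, κ {y | t < ‖V y‖} :=
        lintegral_eq_lintegral_meas_lt κ (.of_forall fun y => norm_nonneg _) (by fun_prop)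
    _ ≤ ∫⁻ t in Set.Ioi 0, c * volume {y | t < ‖V y‖} ^ ((2 : ℝ) / 3) := lintegral_mono hlevel
    _ = c * lorentzNorm321 V := lintegral_const_mul' _ _ hc

theorem measurable_volume_lt_norm_rpow (V : E3 → α) {p : ℝ} (hp : 0 ≤ p) :
    Measurable fun t : ℝ => volume {x | t < ‖V x‖} ^ p := by
  refine Antitone.measurable fun t t' htt' => rpow_le_rpow (measure_mono fun x hx => ?_) hp
  exact htt'.trans_lt hx

theorem MemL321.ae_volume_lt_norm_lt_top (hV : MemL321 V) :
    ∀ᵐ t : ℝ ∂volume.restrict (Set.Ioi 0), volume {x | t < ‖V x‖} < ⊤ := by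
  filter_upwards [ae_lt_top (measurable_volume_lt_norm_rpow V (by norm_num)) hV.ne] with t ht
  exact (rpow_lt_top_iff_of_pos (by norm_num)).mp ht

theorem tendsto_lorentzNorm321_indicator [MeasurableSpace α] [OpensMeasurableSpace α]
    (hVmeas : Measurable V) (hV : MemL321 V) {B : ℕ → Set E3} (hB : ∀ n, MeasurableSet (B n))
    (hanti : Antitone B) (hempty : ⋂ n, B n = ∅) :
    Tendsto (fun n => lorentzNorm321 ((B n).indicator V)) atTop (𝓝 0) := by
  have hlevel (n : ℕ) {t : ℝ} (ht : 0 ≤ t) :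
      {x | t < ‖(B n).indicator V x‖} = {x | t < ‖V x‖} ∩ B n := by
    ext x
    by_cases hx : x ∈ B n <;> simp [hx, ht]
  have hlim : Tendsto (fun n => lorentzNorm321 ((B n).indicator V)) atTop
      (𝓝 (∫⁻ _ in Set.Ioi (0 : ℝ), 0)) := by
    refine tendsto_lintegral_of_dominated_convergence _
      (fun n => measurable_volume_lt_norm_rpow _ (by norm_num)) (fun n => ?_) hV.ne ?_
    · filter_upwards [ae_restrict_mem measurableSet_Ioi] with t ht
      rw [hlevel n (le_of_lt ht)]
      gcongr
      exact Set.inter_subset_left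
    · filter_upwards [ae_restrict_mem measurableSet_Ioi, hV.ae_volume_lt_norm_lt_top]
        with t ht htop
      simp_rw [hlevel _ (le_of_lt ht)]
      have hvol := tendsto_measure_iInter_atTop (μ := volume)
        (s := fun n => {x | t < ‖V x‖} ∩ B n)
        (fun n => ((measurableSet_lt (by fun_prop) (by fun_prop)).inter (hB n)).nullMeasurableSet)
        (fun m n hmn => Set.inter_subset_inter_right _ (hanti hmn))
        ⟨0, measure_ne_top_of_subset Set.inter_subset_left htop.ne⟩
      rw [← Set.inter_iInter, hempty, Set.inter_empty, measure_empty] at hvol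
      have hpow := (continuous_rpow_const (y := (2 : ℝ) / 3)).continuousAt.tendsto.comp hvol
      rwa [zero_rpow_of_pos (by norm_num)] at hpow
  simpa using hlim

theorem exists_nat_newtonPotential_indicator_compl_le [MeasurableSpace α] [OpensMeasurableSpace α]
    (hVmeas : Measurable V) (hV : MemL321 V) {A : ℕ → Set E3} (hA : ∀ n, MeasurableSet (A n))
    (hmono : Monotone A) (huniv : ⋃ n, A n = Set.univ) {ε : ℝ≥0∞} (hε : 0 < ε) :
    ∃ n, ∀ x, newtonPotential volume (fun y => ‖(A n)ᶜ.indicator V y‖ₑ) x ≤ ε := by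
  obtain ⟨c, hc, hle⟩ := exists_newtonPotential_enorm_le_mul_lorentzNorm321 (α := α)
  have hlim := ENNReal.Tendsto.const_mul (a := c) (tendsto_lorentzNorm321_indicator hVmeas hV
    (fun n => (hA n).compl) (fun m n hmn => Set.compl_subset_compl.mpr (hmono hmn))
    (by rw [← Set.compl_iUnion, huniv, Set.compl_univ])) (.inr hc)
  rw [mul_zero] at hlim
  obtain ⟨n, hn⟩ := (hlim.eventually_le_const hε).exists
  exact ⟨n, fun x => (hle _ (hVmeas.indicator (hA n).compl) x).trans hn⟩

theorem exists_isBounded_newtonPotential_indicator_compl_le [MeasurableSpace α]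
    [OpensMeasurableSpace α] (hVmeas : Measurable V) (hV : MemL321 V) {ε : ℝ≥0∞} (hε : 0 < ε) :
    ∃ A : Set E3, MeasurableSet A ∧ Bornology.IsBounded A ∧ (∃ n : ℕ, ∀ y ∈ A, ‖V y‖ₑ ≤ n) ∧
      ∀ x, newtonPotential volume (Aᶜ.indicator fun y => ‖V y‖ₑ) x ≤ ε := by
  set A : ℕ → Set E3 := fun n => Metric.closedBall 0 n ∩ (fun y => ‖V y‖ₑ) ⁻¹' Set.Iic n
  have hA (n : ℕ) : MeasurableSet (A n) :=
    Metric.isClosed_closedBall.measurableSet.inter (hVmeas.enorm measurableSet_Iic)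
  have hmono : Monotone A := fun m n hmn => Set.inter_subset_inter
    (Metric.closedBall_subset_closedBall (Nat.cast_le.mpr hmn))
    (Set.preimage_mono (Set.Iic_subset_Iic.mpr (Nat.cast_le.mpr hmn)))
  have huniv : ⋃ n, A n = Set.univ := by
    refine Set.eq_univ_of_forall fun y => Set.mem_iUnion.mpr ?_
    obtain ⟨m, hm⟩ := exists_nat_ge ‖y‖
    obtain ⟨n, hn⟩ := ENNReal.exists_nat_gt (enorm_ne_top (x := V y))
    refine ⟨max m n, mem_closedBall_zero_iff.mpr (hm.trans ?_), hn.le.trans ?_⟩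
    · exact Nat.cast_le.mpr (le_max_left m n)
    · exact Nat.cast_le.mpr (le_max_right m n)
  obtain ⟨n, hn⟩ := exists_nat_newtonPotential_indicator_compl_le hVmeas hV hA hmono huniv hε
  refine ⟨A n, hA n, Metric.isBounded_closedBall.subset Set.inter_subset_left,
    ⟨n, fun y hy => hy.2⟩, fun x => ?_⟩
  simpa only [enorm_indicator_eq_indicator_enorm] using hn x

theorem MemL321.lintegral_lt_top_and_ae_newtonPotential_le [MeasurableSpace α]
    [OpensMeasurableSpace α] (hV : MemL321 V) (hVmeas : Measurable V) {u : E3 → ℝ≥0∞}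
    (hu : Measurable u) (hle : ∀ᵐ x, u x ≤ newtonPotential volume (fun y => ‖V y‖ₑ * u y) x)
    (hfin : ∀ᵐ x, newtonPotential volume (fun y => ‖V y‖ₑ * u y) x < ⊤) :
    ∫⁻ y, ‖V y‖ₑ * u y < ⊤ ∧
      ∃ M : ℝ≥0∞, M ≠ ⊤ ∧ ∀ᵐ x, newtonPotential volume (fun y => ‖V y‖ₑ * u y) x ≤ M := by
  obtain ⟨A, hA, hAbdd, ⟨n, hAn⟩, hsmall⟩ :=
    exists_isBounded_newtonPotential_indicator_compl_le hVmeas hV (ε := 4⁻¹) (by simp)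
  have hmass : ∫⁻ y, ‖V y‖ₑ * u y < ⊤ :=
    lintegral_mul_lt_top_of_le_newtonPotential hA hAbdd hVmeas.enorm hu hsmall hle hfin
  obtain ⟨c, hc, hset⟩ := exists_setLIntegral_enorm_sub_rpow_neg_le (E := E3) (μ := volume)
    (s := 2) zero_le_two (by norm_num [finrank_euclideanSpace])
  set K : ℝ≥0∞ := c * volume A ^ (1 - 2 / finrank ℝ E3 : ℝ)
  have hK : K ≠ ⊤ := mul_ne_top hc <| rpow_ne_top_of_nonneg
    (by norm_num [finrank_euclideanSpace]) hAbdd.measure_lt_top.ne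
  have hM (z : E3) : ∫⁻ y in A, ‖V y‖ₑ * ‖z - y‖ₑ ^ (-2 : ℝ) ≤ n * K := by
    calc ∫⁻ y in A, ‖V y‖ₑ * ‖z - y‖ₑ ^ (-2 : ℝ)
        ≤ ∫⁻ y in A, n * ‖z - y‖ₑ ^ (-2 : ℝ) :=
          setLIntegral_mono' hA fun y hy => by gcongr; exact hAn y hy
      _ = n * ∫⁻ y in A, ‖z - y‖ₑ ^ (-2 : ℝ) := lintegral_const_mul _ (by fun_prop)
      _ ≤ n * K := by gcongr; exact hset z A
  exact ⟨hmass, _, mul_ne_top (mul_ne_top ofNat_ne_top (mul_ne_top (natCast_ne_top n) hK)) hmass.ne,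
    ae_newtonPotential_mul_le_mul_lintegral hA hVmeas.enorm hu hsmall hM hle hfin⟩

end LorentzSpace

section Superposition

variable {X W F : Type*} [MeasurableSpace X] [MeasurableSpace W] [NormedAddCommGroup F]
  [NormedSpace ℝ F] {ν : Measure X} {μ : Measure W} {h : X → W → ℝ} {κ : X → ℝ} {c : ℝ}
  {f : X → F}

/-- Up to the factor `c`, the kernel `κ` is `ν`-a.e. the superposition, with respect to `μ`, of the
nonnegative functions `fun x => h x w`. -/
structure IsSuperposition (ν : Measure X) (μ : Measure W) (h : X → W → ℝ) (c : ℝ) (κ : X → ℝ) :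
    Prop where
  measurable : Measurable (Function.uncurry h)
  nonneg : ∀ x w, 0 ≤ h x w
  ae_integrable : ∀ᵐ x ∂ν, Integrable (h x) μ
  ae_integral_eq : ∀ᵐ x ∂ν, ∫ w, h x w ∂μ = c * κ x

theorem IsSuperposition.integrable_prod_smul [SFinite μ] (hκ : IsSuperposition ν μ h c κ)
    (hf : AEStronglyMeasurable f ν) (hint : Integrable (fun x => κ x • f x) ν) :
    Integrable (fun p : X × W => h p.1 p.2 • f p.1) (ν.prod μ) := by
  refine (integrable_prod_iff (hκ.measurable.aestronglyMeasurable.smul hf.comp_fst)).mpr ⟨?_, ?_⟩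
  · exact hκ.ae_integrable.mono fun x hx => hx.smul_const (f x)
  · refine (hint.norm.const_mul |c|).congr (hκ.ae_integral_eq.mono fun x hx => ?_)
    have hnorm (w : W) : ‖h x w • f x‖ = h x w * ‖f x‖ := by
      rw [norm_smul, Real.norm_of_nonneg (hκ.nonneg x w)]
    change |c| * ‖κ x • f x‖ = ∫ w, ‖h x w • f x‖ ∂μ
    simp only [hnorm]
    rw [norm_smul, ← mul_assoc, integral_mul_const, Real.norm_eq_abs, ← abs_mul, ← hx,
      abs_of_nonneg (integral_nonneg (hκ.nonneg x))]

theorem IsSuperposition.integral_integral_smul [SFinite ν] [SFinite μ] [CompleteSpace F]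
    (hκ : IsSuperposition ν μ h c κ) (hf : AEStronglyMeasurable f ν)
    (hint : Integrable (fun x => κ x • f x) ν) :
    ∫ w, ∫ x, h x w • f x ∂ν ∂μ = c • ∫ x, κ x • f x ∂ν := by
  rw [← integral_integral_swap (hκ.integrable_prod_smul hf hint), ← integral_smul]
  refine integral_congr_ae (hκ.ae_integral_eq.mono fun x hx => ?_)
  beta_reduce
  rw [integral_smul_const, hx, mul_smul]

end Superposition

section Gaussian

variable {E : Type*} [NormedAddCommGroup E] [InnerProductSpace ℝ E] {s : ℝ} {x y : E}

/-- The Gaussian on `E` of inverse width `s` and center `z`, normalized in `L²(E)`. -/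
noncomputable def gaussianBump (s : ℝ) (z x : E) : ℝ :=
  (4 * s ^ 2 / Real.pi) ^ (finrank ℝ E / 4 : ℝ) * Real.exp (-(2 * s ^ 2) * ‖x - z‖ ^ 2)

theorem gaussianBump_nonneg (s : ℝ) (z x : E) : 0 ≤ gaussianBump s z x := by
  unfold gaussianBump
  positivity

theorem gaussianBump_mul_gaussianBump (s : ℝ) (x y z : E) :
    gaussianBump s z x * gaussianBump s z y
      = (4 * s ^ 2 / Real.pi) ^ (finrank ℝ E / 2 : ℝ) * Real.exp (-s ^ 2 * ‖x - y‖ ^ 2)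
        * Real.exp (-(4 * s ^ 2) * ‖z - midpoint ℝ x y‖ ^ 2) := by
  have hpar : ‖x - z‖ ^ 2 + ‖y - z‖ ^ 2 = 2 * ‖z - midpoint ℝ x y‖ ^ 2 + ‖x - y‖ ^ 2 / 2 := by
    have hsum : x - z + (y - z) = (-2 : ℝ) • (z - midpoint ℝ x y) := by
      rw [midpoint_eq_smul_add, invOf_eq_inv]
      module
    have h := parallelogram_law_with_norm ℝ (x - z) (y - z)
    rw [hsum, sub_sub_sub_cancel_right, norm_smul] at h
    norm_num at h
    linarith
  have hpow (a : ℝ) (ha : 0 ≤ a) :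
      a ^ (finrank ℝ E / 4 : ℝ) * a ^ (finrank ℝ E / 4 : ℝ) = a ^ (finrank ℝ E / 2 : ℝ) := by
    rw [← Real.rpow_add_of_nonneg ha (by positivity) (by positivity)]
    ring_nf
  rw [gaussianBump, gaussianBump, mul_mul_mul_comm, hpow _ (by positivity), mul_assoc,
    ← Real.exp_add, ← Real.exp_add]
  congr 2
  linear_combination (-(2 * s ^ 2)) * hpar

variable [FiniteDimensional ℝ E] [MeasurableSpace E] [BorelSpace E]

theorem integrable_exp_neg_mul_norm_sub_sq {b : ℝ} (hb : 0 < b) (m : E) :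
    Integrable fun z : E => Real.exp (-b * ‖z - m‖ ^ 2) := by
  refine Integrable.comp_sub_right (f := fun z => Real.exp (-b * ‖z‖ ^ 2))
    (Integrable.of_integral_ne_zero ?_) m
  rw [GaussianFourier.integral_rexp_neg_mul_sq_norm hb]
  positivity

theorem integrable_gaussianBump_mul_gaussianBump (hs : s ≠ 0) (x y : E) :
    Integrable fun z => gaussianBump s z x * gaussianBump s z y := by
  simp only [gaussianBump_mul_gaussianBump]
  exact (integrable_exp_neg_mul_norm_sub_sq (by positivity) _).const_mul _

theorem integral_gaussianBump_mul_gaussianBump (hs : s ≠ 0) (x y : E) :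
    ∫ z, gaussianBump s z x * gaussianBump s z y = Real.exp (-s ^ 2 * ‖x - y‖ ^ 2) := by
  simp only [gaussianBump_mul_gaussianBump]
  rw [integral_const_mul,
    integral_sub_right_eq_self fun z : E => Real.exp (-(4 * s ^ 2) * ‖z‖ ^ 2),
    GaussianFourier.integral_rexp_neg_mul_sq_norm (by positivity), mul_right_comm,
    ← Real.mul_rpow (by positivity) (by positivity)]
  field_simp
  simp

theorem integrableOn_Ioi_exp_neg_mul_sq_mul_sq {a r : ℝ} (ha : 0 < a) (hr : 0 < r) :
    IntegrableOn (fun s => Real.exp (-(a * s ^ 2) * r ^ 2)) (Set.Ioi 0) := by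
  refine (integrable_exp_neg_mul_sq (b := a * r ^ 2) (by positivity)).integrableOn.congr_fun
    (fun s _ => ?_) measurableSet_Ioi
  ring_nf

theorem integral_Ioi_exp_neg_mul_sq_mul_sq (a : ℝ) {r : ℝ} (hr : 0 ≤ r) :
    ∫ s in Set.Ioi 0, Real.exp (-(a * s ^ 2) * r ^ 2) = √(Real.pi / a) / 2 * r⁻¹ := by
  have hcomm (s : ℝ) : -(a * s ^ 2) * r ^ 2 = -(a * r ^ 2) * s ^ 2 := by ring
  simp only [hcomm]
  rw [integral_gaussian_Ioi, ← div_div, Real.sqrt_div' _ (by positivity), Real.sqrt_sq hr]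
  ring

theorem isSuperposition_exp_gaussianBump (x y : E) :
    IsSuperposition (volume.restrict (Set.Ioi 0)) volume
      (fun s z => gaussianBump s z x * gaussianBump s z y) 1
      fun s => Real.exp (-s ^ 2 * ‖x - y‖ ^ 2) where
  measurable := by
    unfold gaussianBump
    fun_prop
  nonneg s z := mul_nonneg (gaussianBump_nonneg s z x) (gaussianBump_nonneg s z y)
  ae_integrable := by
    filter_upwards [ae_restrict_mem measurableSet_Ioi] with s (hs : 0 < s)
    exact integrable_gaussianBump_mul_gaussianBump hs.ne' x y
  ae_integral_eq := by
    filter_upwards [ae_restrict_mem measurableSet_Ioi] with s (hs : 0 < s)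
    rw [integral_gaussianBump_mul_gaussianBump hs.ne', one_mul]

/-- The measure `ds dz` on the scales `s > 0` and centers `z` of the Gaussians `gaussianBump`. -/
noncomputable abbrev gaussianParam (E : Type*) [NormedAddCommGroup E] [InnerProductSpace ℝ E]
    [FiniteDimensional ℝ E] [MeasurableSpace E] [BorelSpace E] : Measure (ℝ × E) :=
  (volume.restrict (Set.Ioi 0)).prod volume

theorem integrable_gaussianParam_gaussianBump_mul_gaussianBump (hxy : x ≠ y) :
    Integrable (fun w : ℝ × E => gaussianBump w.1 w.2 x * gaussianBump w.1 w.2 y)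
      (gaussianParam E) := by
  have hscale := integrableOn_Ioi_exp_neg_mul_sq_mul_sq one_pos
    (norm_pos_iff.mpr (sub_ne_zero.mpr hxy))
  simpa only [smul_eq_mul, mul_one] using
    (isSuperposition_exp_gaussianBump x y).integrable_prod_smul
      (f := fun _ => (1 : ℝ)) aestronglyMeasurable_const
      (by simpa only [smul_eq_mul, mul_one, one_mul, IntegrableOn] using hscale)

theorem integral_gaussianParam_gaussianBump_mul_gaussianBump (hxy : x ≠ y) :
    ∫ w, gaussianBump w.1 w.2 x * gaussianBump w.1 w.2 y ∂gaussianParam E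
      = √Real.pi / 2 * ‖x - y‖⁻¹ := by
  have hscale := integral_Ioi_exp_neg_mul_sq_mul_sq 1 (norm_nonneg (x - y))
  simp only [one_mul, div_one] at hscale
  rw [integral_prod _ (integrable_gaussianParam_gaussianBump_mul_gaussianBump hxy),
    integral_congr_ae (isSuperposition_exp_gaussianBump x y).ae_integral_eq]
  simpa only [one_mul] using hscale

variable [Nontrivial E]

theorem ae_prod_fst_ne_snd : ∀ᵐ p : E × E ∂volume.prod volume, p.1 ≠ p.2 := by
  refine (Measure.ae_prod_mem_iff_ae_ae_mem (s := {p : E × E | p.1 ≠ p.2})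
    (measurableSet_eq_fun measurable_fst measurable_snd).compl).mpr (.of_forall fun x => ?_)
  filter_upwards [compl_mem_ae_iff.mpr (measure_singleton x)] with y hy
  exact Ne.symm hy

theorem isSuperposition_inv_norm_sub_gaussianBump :
    IsSuperposition (volume.prod volume) (gaussianParam E)
      (fun p w => gaussianBump w.1 w.2 p.1 * gaussianBump w.1 w.2 p.2) (√Real.pi / 2)
      fun p => ‖p.1 - p.2‖⁻¹ where
  measurable := by
    unfold gaussianBump
    fun_prop
  nonneg p w := mul_nonneg (gaussianBump_nonneg w.1 w.2 p.1) (gaussianBump_nonneg w.1 w.2 p.2)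
  ae_integrable := ae_prod_fst_ne_snd.mono fun _ =>
    integrable_gaussianParam_gaussianBump_mul_gaussianBump
  ae_integral_eq := ae_prod_fst_ne_snd.mono fun _ =>
    integral_gaussianParam_gaussianBump_mul_gaussianBump

theorem isSuperposition_inv_norm_sub_exp (z : E) :
    IsSuperposition volume (volume.restrict (Set.Ioi 0))
      (fun y s => Real.exp (-(2 * s ^ 2) * ‖z - y‖ ^ 2)) (√(Real.pi / 2) / 2)
      fun y => ‖z - y‖⁻¹ where
  measurable := by fun_prop
  nonneg y s := (Real.exp_pos _).le
  ae_integrable := by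
    filter_upwards [compl_mem_ae_iff.mpr (measure_singleton z)] with y hy
    exact integrableOn_Ioi_exp_neg_mul_sq_mul_sq two_pos
      (norm_pos_iff.mpr (sub_ne_zero.mpr (Ne.symm hy)))
  ae_integral_eq := .of_forall fun y => integral_Ioi_exp_neg_mul_sq_mul_sq 2 (norm_nonneg (z - y))

end Gaussian

section CoulombEnergy

variable {E F 𝕜 : Type*} [NormedAddCommGroup E] [NormedAddCommGroup F] [NormedSpace ℝ F]
  [RCLike 𝕜]

/-- The density `f(x) conj(f(y)) / ‖x - y‖` on `E × E` of the Coulomb energy of the charge `f`. -/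
noncomputable def coulombDensity (f : E → 𝕜) (p : E × E) : 𝕜 :=
  ‖p.1 - p.2‖⁻¹ • (f p.1 * conj (f p.2))

theorem enorm_coulombDensity (f : E → 𝕜) (x y : E) :
    ‖coulombDensity f (x, y)‖ₑ = ‖f x‖ₑ * ‖‖x - y‖⁻¹ • f y‖ₑ := by
  have hconj : ‖conj (f y)‖ₑ = ‖f y‖ₑ := by simp only [← ofReal_norm, RCLike.norm_conj]
  rw [coulombDensity, enorm_smul, enorm_smul, enorm_mul, hconj, mul_left_comm]

variable [MeasurableSpace E]

theorem lintegral_enorm_inv_norm_sub_smul {μ : Measure E} [NullSingletonClass μ] (f : E → F)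
    (x : E) : ∫⁻ y, ‖‖x - y‖⁻¹ • f y‖ₑ ∂μ = newtonPotential μ (fun y => ‖f y‖ₑ) x := by
  refine lintegral_congr_ae ?_
  filter_upwards [compl_mem_ae_iff.mpr (measure_singleton x)] with y hy
  have hxy : ‖x - y‖ ≠ 0 := norm_ne_zero_iff.mpr (sub_ne_zero.mpr (Ne.symm hy))
  rw [enorm_smul, enorm_inv hxy, enorm_norm, mul_comm]

variable [InnerProductSpace ℝ E] [FiniteDimensional ℝ E] [BorelSpace E]

/-- The Coulomb energy `∬ f(x) conj(f(y)) / ‖x - y‖ dx dy`. -/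
noncomputable def coulombEnergy (f : E → 𝕜) : 𝕜 :=
  ∫ p, coulombDensity f p ∂volume.prod volume

theorem integral_prod_gaussianBump_smul (f : E → 𝕜) (w : ℝ × E) :
    ∫ p : E × E, (gaussianBump w.1 w.2 p.1 * gaussianBump w.1 w.2 p.2) • (f p.1 * conj (f p.2))
        ∂volume.prod volume
      = ((‖∫ x, gaussianBump w.1 w.2 x • f x‖ ^ 2 : ℝ) : 𝕜) := by
  have hfactor (p : E × E) :
      (gaussianBump w.1 w.2 p.1 * gaussianBump w.1 w.2 p.2) • (f p.1 * conj (f p.2))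
        = (gaussianBump w.1 w.2 p.1 • f p.1) * conj (gaussianBump w.1 w.2 p.2 • f p.2) := by
    rw [← smul_mul_smul_comm]
    simp [RCLike.real_smul_eq_coe_mul]
  simp only [hfactor]
  rw [integral_prod_mul (fun x => gaussianBump w.1 w.2 x • f x)
    fun x => conj (gaussianBump w.1 w.2 x • f x), integral_conj, RCLike.mul_conj]
  norm_cast

variable [Nontrivial E] {f : E → 𝕜}

theorem integrable_coulombDensity (hf : AEStronglyMeasurable f)
    (hfin : ∫⁻ x, ‖f x‖ₑ * newtonPotential volume (fun y => ‖f y‖ₑ) x < ⊤) :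
    Integrable (coulombDensity f) (volume.prod volume) := by
  have hmeas : AEStronglyMeasurable (coulombDensity f) (volume.prod volume) :=
    (Measurable.aestronglyMeasurable (by fun_prop)).smul
      (hf.comp_fst.mul (RCLike.continuous_conj.comp_aestronglyMeasurable hf.comp_snd))
  refine ⟨hmeas, ?_⟩
  rw [hasFiniteIntegral_iff_enorm, lintegral_prod _ hmeas.enorm]
  refine (lintegral_congr fun x => ?_).trans_lt hfin
  simp only [enorm_coulombDensity]
  rw [lintegral_const_mul' _ _ enorm_ne_top, lintegral_enorm_inv_norm_sub_smul]

theorem integrable_sq_norm_integral_gaussianBump_smul (hf : AEStronglyMeasurable f)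
    (hfin : Integrable (coulombDensity f) (volume.prod volume)) :
    Integrable (fun w => ‖∫ x, gaussianBump w.1 w.2 x • f x‖ ^ 2) (gaussianParam E) := by
  have h := (isSuperposition_inv_norm_sub_gaussianBump.integrable_prod_smul
    (hf.comp_fst.mul (RCLike.continuous_conj.comp_aestronglyMeasurable hf.comp_snd))
    hfin).integral_prod_right
  simp only [Pi.mul_apply, integral_prod_gaussianBump_smul] at h
  simpa only [RCLike.ofReal_re] using h.re

theorem ofReal_integral_sq_norm_integral_gaussianBump_smul (hf : AEStronglyMeasurable f)
    (hfin : Integrable (coulombDensity f) (volume.prod volume)) :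
    ((∫ w, ‖∫ x, gaussianBump w.1 w.2 x • f x‖ ^ 2 ∂gaussianParam E : ℝ) : 𝕜)
      = (√Real.pi / 2) • coulombEnergy f := by
  have h := isSuperposition_inv_norm_sub_gaussianBump.integral_integral_smul
    (hf.comp_fst.mul (RCLike.continuous_conj.comp_aestronglyMeasurable hf.comp_snd)) hfin
  simp only [Pi.mul_apply, integral_prod_gaussianBump_smul] at h
  rwa [integral_ofReal] at h

theorem coulombEnergy_nonneg (hf : AEStronglyMeasurable f)
    (hfin : Integrable (coulombDensity f) (volume.prod volume)) :
    0 ≤ RCLike.re (coulombEnergy f) := by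
  have h := congrArg RCLike.re (ofReal_integral_sq_norm_integral_gaussianBump_smul hf hfin)
  rw [RCLike.ofReal_re, RCLike.smul_re] at h
  exact nonneg_of_mul_nonneg_right (h ▸ integral_nonneg fun w => by positivity) (by positivity)

theorem ae_integral_gaussianBump_smul_eq_zero (hf : AEStronglyMeasurable f)
    (hfin : Integrable (coulombDensity f) (volume.prod volume)) (hzero : coulombEnergy f = 0) :
    ∀ᵐ w ∂gaussianParam E, ∫ x, gaussianBump w.1 w.2 x • f x = 0 := by
  have h := ofReal_integral_sq_norm_integral_gaussianBump_smul hf hfin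
  rw [hzero, smul_zero, RCLike.ofReal_eq_zero, integral_eq_zero_iff_of_nonneg
    (fun w => by positivity) (integrable_sq_norm_integral_gaussianBump_smul hf hfin)] at h
  exact h.mono fun w hw => by simpa using hw

-- Up to a nonzero factor, the kernel `‖z - y‖⁻¹` is the integral over all scales of the Gaussians
-- centered at `z`.
theorem ae_integral_inv_norm_sub_smul_eq_zero [CompleteSpace F] {f : E → F}
    (hf : AEStronglyMeasurable f)
    (hzero : ∀ᵐ w ∂gaussianParam E, ∫ x, gaussianBump w.1 w.2 x • f x = 0) :
    ∀ᵐ z, Integrable (fun y => ‖z - y‖⁻¹ • f y) → ∫ y, ‖z - y‖⁻¹ • f y = 0 := by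
  have hswap : ∀ᵐ z : E, ∀ᵐ s : ℝ ∂volume.restrict (Set.Ioi 0),
      ∫ x, gaussianBump s z x • f x = 0 :=
    Measure.ae_ae_of_ae_prod (Measure.measurePreserving_swap.quasiMeasurePreserving.ae hzero)
  filter_upwards [hswap] with z hz hint
  have hinner : ∀ᵐ s : ℝ ∂volume.restrict (Set.Ioi 0),
      ∫ y, Real.exp (-(2 * s ^ 2) * ‖z - y‖ ^ 2) • f y = 0 := by
    filter_upwards [hz, ae_restrict_mem measurableSet_Ioi] with s hs (hpos : 0 < s)
    simp only [gaussianBump, mul_smul, norm_sub_rev _ z] at hs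
    rw [integral_smul] at hs
    exact (smul_eq_zero.mp hs).resolve_left (by positivity)
  have hsuper := (isSuperposition_inv_norm_sub_exp z).integral_integral_smul hf hint
  rw [integral_eq_zero_of_ae hinner, eq_comm] at hsuper
  exact (smul_eq_zero.mp hsuper).resolve_left (by positivity)

end CoulombEnergy

section ZeroEnergy

variable {E F 𝕜 : Type*} [NormedAddCommGroup E] [InnerProductSpace ℝ E] [FiniteDimensional ℝ E]
  [MeasurableSpace E] [BorelSpace E] [NormedAddCommGroup F] [NormedSpace ℝ F] [RCLike 𝕜]

/-- The solutions of `φ + (-Δ)⁻¹ V φ = 0`, with `(-Δ)⁻¹` encoded by the three-dimensional kernel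
`1 / (4π ‖x - y‖)`; absolute convergence of the potential is part of the definition. -/
def IsZeroEnergyState (V : E → ℝ) (φ : E → F) : Prop :=
  ∀ᵐ x, Integrable (fun y => ‖x - y‖⁻¹ • V y • φ y) ∧
    φ x = -(4 * Real.pi)⁻¹ • ∫ y, ‖x - y‖⁻¹ • V y • φ y

theorem isZeroEnergyState_complex_iff {V : E → ℝ} {φ : E → ℂ} :
    IsZeroEnergyState V φ ↔ ∀ᵐ x,
      Integrable (fun y => (V y : ℂ) * φ y / (‖x - y‖ : ℂ)) ∧
      φ x = -(1 / (4 * (Real.pi : ℂ))) * ∫ y, (V y : ℂ) * φ y / (‖x - y‖ : ℂ) := by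
  have hkernel (x y : E) : (V y : ℂ) * φ y / (‖x - y‖ : ℂ) = ‖x - y‖⁻¹ • V y • φ y := by
    rw [Complex.real_smul, Complex.real_smul, Complex.ofReal_inv, div_eq_inv_mul]
  have hconst (w : ℂ) : -(1 / (4 * (Real.pi : ℂ))) * w = -(4 * Real.pi)⁻¹ • w := by
    rw [Complex.real_smul]
    push_cast
    rw [one_div]
  simp only [IsZeroEnergyState, hkernel, hconst]

variable {V : E → ℝ}

theorem IsZeroEnergyState.ae_newtonPotential_lt_top [Nontrivial E] {φ : E → F}
    (hφ : IsZeroEnergyState V φ) :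
    ∀ᵐ x, newtonPotential volume (fun y => ‖V y‖ₑ * ‖φ y‖ₑ) x < ⊤ := by
  filter_upwards [hφ] with x hx
  have h := hasFiniteIntegral_iff_enorm.mp hx.1.2
  rw [lintegral_enorm_inv_norm_sub_smul] at h
  simpa only [enorm_smul] using h

theorem IsZeroEnergyState.ae_enorm_le_newtonPotential [Nontrivial E] {φ : E → F}
    (hφ : IsZeroEnergyState V φ) :
    ∀ᵐ x, ‖φ x‖ₑ ≤ newtonPotential volume (fun y => ‖V y‖ₑ * ‖φ y‖ₑ) x := by
  have hconst : ‖-(4 * Real.pi)⁻¹‖ₑ ≤ 1 := by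
    rw [enorm_neg, Real.enorm_of_nonneg (by positivity), ofReal_le_one]
    exact inv_le_one_of_one_le₀ (by linarith [Real.pi_gt_three])
  filter_upwards [hφ] with x hx
  calc ‖φ x‖ₑ = ‖-(4 * Real.pi)⁻¹‖ₑ * ‖∫ y, ‖x - y‖⁻¹ • V y • φ y‖ₑ := by
        rw [← enorm_smul, ← hx.2]
    _ ≤ 1 * ∫⁻ y, ‖‖x - y‖⁻¹ • V y • φ y‖ₑ :=
        mul_le_mul' hconst (enorm_integral_le_lintegral_enorm _)
    _ = newtonPotential volume (fun y => ‖V y‖ₑ * ‖φ y‖ₑ) x := by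
        rw [one_mul, lintegral_enorm_inv_norm_sub_smul]
        simp only [enorm_smul]

variable {φ : E → 𝕜}

theorem IsZeroEnergyState.ofReal_integral_mul_sq_norm (hφ : IsZeroEnergyState V φ)
    (hint : Integrable (coulombDensity fun x => V x • φ x) (volume.prod volume)) :
    ((∫ x, V x * ‖φ x‖ ^ 2 : ℝ) : 𝕜)
      = -(4 * Real.pi)⁻¹ • coulombEnergy fun x => V x • φ x := by
  rw [coulombEnergy, integral_prod _ hint, ← integral_smul, ← integral_ofReal]
  refine integral_congr_ae ?_
  filter_upwards [hφ] with x hx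
  calc ((V x * ‖φ x‖ ^ 2 : ℝ) : 𝕜) = (V x • φ x) * conj (φ x) := by
        rw [smul_mul_assoc, RCLike.mul_conj, RCLike.real_smul_eq_coe_mul]
        norm_cast
    _ = -(4 * Real.pi)⁻¹ • ((V x • φ x) * conj (∫ y, ‖x - y‖⁻¹ • V y • φ y)) := by
        rw [← mul_smul_comm, ← RCLike.conj_smul, ← hx.2]
    _ = -(4 * Real.pi)⁻¹ • ∫ y, coulombDensity (fun x => V x • φ x) (x, y) := by
        simp only [coulombDensity, ← mul_smul_comm]
        rw [integral_const_mul, ← integral_conj, mul_smul_comm]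
        simp only [RCLike.conj_smul]

variable [Nontrivial E]

theorem IsZeroEnergyState.integral_mul_sq_norm_nonpos (hφ : IsZeroEnergyState V φ)
    (hmeas : AEStronglyMeasurable fun x => V x • φ x)
    (hint : Integrable (coulombDensity fun x => V x • φ x) (volume.prod volume)) :
    ∫ x, V x * ‖φ x‖ ^ 2 ≤ 0 := by
  have h := congrArg RCLike.re (hφ.ofReal_integral_mul_sq_norm hint)
  rw [RCLike.ofReal_re, RCLike.smul_re] at h
  rw [h, neg_mul, neg_nonpos]
  exact mul_nonneg (by positivity) (coulombEnergy_nonneg hmeas hint)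

theorem IsZeroEnergyState.ae_eq_zero (hφ : IsZeroEnergyState V φ)
    (hmeas : AEStronglyMeasurable fun x => V x • φ x)
    (hint : Integrable (coulombDensity fun x => V x • φ x) (volume.prod volume))
    (hzero : ∫ x, V x * ‖φ x‖ ^ 2 = 0) : φ =ᵐ[volume] 0 := by
  have henergy : coulombEnergy (fun x => V x • φ x) = 0 := by
    have h := hφ.ofReal_integral_mul_sq_norm hint
    rw [hzero, RCLike.ofReal_zero, eq_comm] at h
    exact (smul_eq_zero.mp h).resolve_left (neg_ne_zero.mpr (by positivity))
  have hpot := ae_integral_inv_norm_sub_smul_eq_zero hmeas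
    (ae_integral_gaussianBump_smul_eq_zero hmeas hint henergy)
  filter_upwards [hφ, hpot] with x hx hpotx
  rw [hx.2, hpotx hx.1, smul_zero, Pi.zero_apply]

end ZeroEnergy

section InnerProduct

variable {𝕜 : Type*} [RCLike 𝕜] {V : E3 → ℝ} {φ : E3 → 𝕜}

theorem IsZeroEnergyState.lintegral_lt_top_and_ae_newtonPotential_le (hφ : IsZeroEnergyState V φ)
    (hVmeas : Measurable V) (hV : MemL321 V) (hφmeas : Measurable φ) :
    ∫⁻ y, ‖V y‖ₑ * ‖φ y‖ₑ < ⊤ ∧ ∃ M : ℝ≥0∞, M ≠ ⊤ ∧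
      ∀ᵐ x, newtonPotential volume (fun y => ‖V y‖ₑ * ‖φ y‖ₑ) x ≤ M :=
  hV.lintegral_lt_top_and_ae_newtonPotential_le hVmeas hφmeas.enorm hφ.ae_enorm_le_newtonPotential
    hφ.ae_newtonPotential_lt_top

theorem lintegral_mul_lt_top_of_ae_le {X : Type*} [MeasurableSpace X] {μ : Measure X}
    {f g : X → ℝ≥0∞} {M : ℝ≥0∞} (hf : ∫⁻ x, f x ∂μ < ⊤) (hM : M ≠ ⊤) (hg : ∀ᵐ x ∂μ, g x ≤ M) :
    ∫⁻ x, f x * g x ∂μ < ⊤ := by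
  calc ∫⁻ x, f x * g x ∂μ ≤ ∫⁻ x, f x * M ∂μ :=
        lintegral_mono_ae (hg.mono fun x hx => by gcongr)
    _ = (∫⁻ x, f x ∂μ) * M := lintegral_mul_const' _ _ hM
    _ < ⊤ := mul_lt_top hf hM.lt_top

theorem IsZeroEnergyState.integrable_mul_sq_norm (hφ : IsZeroEnergyState V φ)
    (hVmeas : Measurable V) (hV : MemL321 V) (hφmeas : Measurable φ) :
    Integrable fun x => V x * ‖φ x‖ ^ 2 := by
  obtain ⟨hmass, M, hM, hle⟩ := hφ.lintegral_lt_top_and_ae_newtonPotential_le hVmeas hV hφmeas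
  refine ⟨Measurable.aestronglyMeasurable (by fun_prop), hasFiniteIntegral_iff_enorm.mpr ?_⟩
  simp only [sq, enorm_mul, enorm_norm, ← mul_assoc]
  refine lintegral_mul_lt_top_of_ae_le hmass hM ?_
  filter_upwards [hφ.ae_enorm_le_newtonPotential, hle] with x hx hxM
  exact hx.trans hxM

theorem IsZeroEnergyState.integrable_coulombDensity_smul (hφ : IsZeroEnergyState V φ)
    (hVmeas : Measurable V) (hV : MemL321 V) (hφmeas : Measurable φ) :
    Integrable (coulombDensity fun x => V x • φ x) (volume.prod volume) := by
  obtain ⟨hmass, M, hM, hle⟩ := hφ.lintegral_lt_top_and_ae_newtonPotential_le hVmeas hV hφmeas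
  refine integrable_coulombDensity (hVmeas.smul hφmeas).aestronglyMeasurable ?_
  simp only [enorm_smul]
  exact lintegral_mul_lt_top_of_ae_le hmass hM hle

theorem inner_product_on_M_general (hVmeas : Measurable V) (hV : MemL321 V)
    (hφmeas : Measurable φ) (hφ : IsZeroEnergyState V φ) :
    Integrable (fun x => V x * ‖φ x‖ ^ 2) ∧ ∫ x, V x * ‖φ x‖ ^ 2 ≤ 0 ∧
      (∫ x, V x * ‖φ x‖ ^ 2 = 0 → φ =ᵐ[volume] 0) := by
  have hmeas : AEStronglyMeasurable fun x => V x • φ x :=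
    (hVmeas.smul hφmeas).aestronglyMeasurable
  have hint := hφ.integrable_coulombDensity_smul hVmeas hV hφmeas
  exact ⟨hφ.integrable_mul_sq_norm hVmeas hV hφmeas, hφ.integral_mul_sq_norm_nonpos hmeas hint,
    hφ.ae_eq_zero hmeas hint⟩

end InnerProduct

/-- Lemma 2.2: for `φ ∈ 𝓜`, the quantity `-∫ V|φ|²` is well defined and nonnegative, and
vanishes only for `φ = 0`. -/
theorem inner_product_on_M (V : E3 → ℝ) (hVmeas : Measurable V) (hV : MemL321 V)
    (φ : E3 → ℂ) (hφmeas : Measurable φ) (hφbdd : ∃ C : ℝ, ∀ᵐ x : E3 ∂volume, ‖φ x‖ ≤ C)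
    (heq : ∀ᵐ x : E3 ∂volume,
      Integrable (fun y : E3 => (V y : ℂ) * φ y / (‖x - y‖ : ℂ)) volume ∧
      φ x = -(1 / (4 * (Real.pi : ℂ))) * ∫ y : E3, (V y : ℂ) * φ y / (‖x - y‖ : ℂ)) :
    Integrable (fun x : E3 => V x * ‖φ x‖ ^ 2) volume ∧
    (∫ x : E3, V x * ‖φ x‖ ^ 2) ≤ 0 ∧
    ((∫ x : E3, V x * ‖φ x‖ ^ 2) = 0 → φ =ᵐ[volume] 0) := by
  exact inner_product_on_M_general hVmeas hV hφmeas (isZeroEnergyState_complex_iff.mpr heq)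
end

section
/- Let V : ℝ³ → ℝ be measurable with V ∈ L^{3/2,1}(ℝ³), and let φ ∈ 𝓜, i.e. φ : ℝ³ → ℂ is essentially bounded and satisfies for a.e. x that y ↦ V(y)φ(y)/‖x−y‖ is integrable and φ(x) = −(1/(4π)) ∫_{ℝ³} V(y)φ(y)/‖x−y‖ dy. Then there is a constant C such that |φ(x)| ≤ C/(1 + ‖x‖) for a.e. x ∈ ℝ³. -/
open MeasureTheory ENNReal

/-!
Write `⟨x⟩ = 1 + d(o, x)`. Since `d(x, ·)^{-a}` lies in weak `L^{d/a}` uniformly in `x`, its pairing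
with `|V| ∈ L^{p,1}`, `1/p + a/d = 1`, is bounded uniformly in `x`. The pointwise inequality
`d(x, y)^{-a} ⟨y⟩^{-a} ≤ 2^a (d(x, y)^{-a} + d(o, y)^{-a}) ⟨x⟩^{-a}` then bounds the potential
operator on `⟨x⟩^{-a} L^∞` as well as on `L^∞`. Cut `V` at a large ball around `o`. The inner part
maps the bounded function `φ` into `⟨x⟩^{-a} L^∞`, while the outer part has norm at most `1/2` on
both spaces, the `L^{p,1}` norm being absolutely continuous. Iterating the equation for `φ`
therefore gives `|φ| ≤ B ⟨x⟩^{-a} + 2^{-n} ‖φ‖_∞` for every `n`.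
-/

open Filter Metric
open scoped NNReal Topology

section Lorentz

variable {α : Type*} [MeasurableSpace α] {μ : Measure α}

/-- The `L^{p,1}` quasinorm `∫₀^∞ μ{f > t}^{1/p} dt`, without the customary factor `p`. The function
is `ℝ≥0∞`-valued, so that a Lorentz space of vector-valued functions is obtained by inserting
`‖f ·‖ₑ`. -/
noncomputable def lorentzOneNorm (p : ℝ) (f : α → ℝ≥0∞) (μ : Measure α) : ℝ≥0∞ :=
  ∫⁻ t in Set.Ioi (0 : ℝ), μ {x | ENNReal.ofReal t < f x} ^ p⁻¹

lemma antitone_measure_ofReal_lt (f : α → ℝ≥0∞) (μ : Measure α) :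
    Antitone fun t : ℝ => μ {x | ENNReal.ofReal t < f x} := fun _ _ hst =>
  measure_mono fun _ hx => (ENNReal.ofReal_le_ofReal hst).trans_lt hx

theorem lintegral_eq_lintegral_meas_ofReal_lt {f : α → ℝ≥0∞} (hf : AEMeasurable f μ) :
    ∫⁻ x, f x ∂μ = ∫⁻ t in Set.Ioi (0 : ℝ), μ {x | ENNReal.ofReal t < f x} := by
  by_cases htop : μ {x | f x = ⊤} = 0
  · have hfin : ∀ᵐ x ∂μ, f x ≠ ⊤ := by simpa [ae_iff] using htop
    calc ∫⁻ x, f x ∂μ = ∫⁻ x, ENNReal.ofReal (f x).toReal ∂μ :=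
          lintegral_congr_ae (hfin.mono fun x hx => (ENNReal.ofReal_toReal hx).symm)
      _ = ∫⁻ t in Set.Ioi (0 : ℝ), μ {x | t < (f x).toReal} :=
          lintegral_eq_lintegral_meas_lt μ (.of_forall fun _ => toReal_nonneg) hf.ennreal_toReal
      _ = ∫⁻ t in Set.Ioi (0 : ℝ), μ {x | ENNReal.ofReal t < f x} := by
          refine setLIntegral_congr_fun measurableSet_Ioi fun t ht => measure_congr ?_
          filter_upwards [hfin] with x hx
          exact propext (ENNReal.ofReal_lt_iff_lt_toReal (le_of_lt ht) hx).symm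
  · have hright : ∫⁻ t in Set.Ioi (0 : ℝ), μ {x | ENNReal.ofReal t < f x} = ⊤ := by
      refine top_unique ?_
      calc ⊤ = ∫⁻ _ in Set.Ioi (0 : ℝ), μ {x | f x = ⊤} := by simp [ENNReal.mul_top htop]
        _ ≤ _ := lintegral_mono fun t => measure_mono fun x (hx : f x = ⊤) => by simp [hx]
    rw [hright]
    by_contra hleft
    exact htop (by simpa [ae_iff] using ae_lt_top' hf hleft)

lemma lintegral_Ioi_ofReal_rpow_neg {q τ : ℝ} (hq : 1 < q) (hτ : 0 < τ) :
    ∫⁻ t in Set.Ioi τ, ENNReal.ofReal t ^ (-q) =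
      ENNReal.ofReal (q - 1)⁻¹ * ENNReal.ofReal τ ^ (1 - q) := by
  have hnonneg : ∀ᵐ t ∂volume.restrict (Set.Ioi τ), 0 ≤ t ^ (-q) := by
    filter_upwards [ae_restrict_mem measurableSet_Ioi] with t ht
    exact Real.rpow_nonneg (hτ.trans ht).le _
  calc ∫⁻ t in Set.Ioi τ, ENNReal.ofReal t ^ (-q)
      = ∫⁻ t in Set.Ioi τ, ENNReal.ofReal (t ^ (-q)) :=
        setLIntegral_congr_fun measurableSet_Ioi fun t ht =>
          ENNReal.ofReal_rpow_of_pos (hτ.trans ht)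
    _ = ENNReal.ofReal (∫ t in Set.Ioi τ, t ^ (-q)) :=
        (ofReal_integral_eq_lintegral_ofReal
          (integrableOn_Ioi_rpow_of_lt (by linarith) hτ) hnonneg).symm
    _ = ENNReal.ofReal ((q - 1)⁻¹ * τ ^ (1 - q)) := by
        rw [integral_Ioi_rpow_of_lt (by linarith) hτ, neg_add_eq_sub, ← neg_sub q 1, neg_div_neg_eq,
          div_eq_inv_mul]
    _ = _ := by
        rw [ENNReal.ofReal_mul (inv_nonneg.2 (by linarith)), ENNReal.ofReal_rpow_of_pos hτ]

theorem setLIntegral_le_of_weakType {q : ℝ} (hq : 1 < q) {c : ℝ≥0} {k : α → ℝ≥0∞}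
    (hk : AEMeasurable k μ)
    (hweak : ∀ t : ℝ, 0 < t → μ {y | ENNReal.ofReal t < k y} ≤ c * ENNReal.ofReal t ^ (-q))
    (s : Set α) :
    ∫⁻ y in s, k y ∂μ ≤ (1 + ENNReal.ofReal (q - 1)⁻¹ * c) * μ s ^ (1 - q⁻¹) := by
  have hexp : 0 < 1 - q⁻¹ := sub_pos.2 (inv_lt_one_of_one_lt₀ hq)
  rcases eq_or_ne (μ s) 0 with hzero | hzero
  · simp [Measure.restrict_eq_zero.2 hzero]
  rcases eq_or_ne (μ s) ⊤ with htop | htop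
  · simp [htop, hexp, ENNReal.mul_top]
  -- The two bounds `μ s` and `c * t ^ (-q)` on the level sets balance at `t = τ`, up to constants.
  set τ : ℝ := (μ s ^ (-q⁻¹)).toReal
  have hne_top : μ s ^ (-q⁻¹) ≠ ⊤ := ENNReal.rpow_ne_top_of_ne_zero hzero htop
  have hτ : ENNReal.ofReal τ = μ s ^ (-q⁻¹) := ENNReal.ofReal_toReal hne_top
  have hτ_pos : 0 < τ :=
    ENNReal.toReal_pos (by simp [ENNReal.rpow_eq_zero_iff, hzero, htop]) hne_top
  have hsmall : ∫⁻ t in Set.Ioc 0 τ, μ.restrict s {y | ENNReal.ofReal t < k y} ≤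
      μ s ^ (1 - q⁻¹) :=
    calc _ ≤ ∫⁻ _ in Set.Ioc 0 τ, μ s :=
          lintegral_mono fun t => (measure_mono (Set.subset_univ _)).trans (by simp)
      _ = μ s ^ (1 : ℝ) * μ s ^ (-q⁻¹) := by simp [hτ]
      _ = μ s ^ (1 - q⁻¹) := by rw [← ENNReal.rpow_add _ _ hzero htop, sub_eq_add_neg]
  have hlarge : ∫⁻ t in Set.Ioi τ, μ.restrict s {y | ENNReal.ofReal t < k y} ≤
      ENNReal.ofReal (q - 1)⁻¹ * c * μ s ^ (1 - q⁻¹) :=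
    calc _ ≤ ∫⁻ t in Set.Ioi τ, c * ENNReal.ofReal t ^ (-q) :=
          setLIntegral_mono' measurableSet_Ioi fun t ht =>
            (Measure.restrict_apply_le _ _).trans (hweak t (hτ_pos.trans ht))
      _ = ENNReal.ofReal (q - 1)⁻¹ * c * (μ s ^ (-q⁻¹)) ^ (1 - q) := by
          rw [lintegral_const_mul' _ _ coe_ne_top, lintegral_Ioi_ofReal_rpow_neg hq hτ_pos, hτ]
          ring
      _ = _ := by
          rw [← ENNReal.rpow_mul]
          congr 2
          have hq_ne : q ≠ 0 := by linarith
          field_simp [hq_ne]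
          ring
  calc ∫⁻ y in s, k y ∂μ
      = (∫⁻ t in Set.Ioc 0 τ, μ.restrict s {y | ENNReal.ofReal t < k y}) +
          ∫⁻ t in Set.Ioi τ, μ.restrict s {y | ENNReal.ofReal t < k y} := by
        rw [lintegral_eq_lintegral_meas_ofReal_lt hk.restrict,
          ← Set.Ioc_union_Ioi_eq_Ioi hτ_pos.le,
          lintegral_union measurableSet_Ioi (Set.Ioc_disjoint_Ioi le_rfl)]
    _ ≤ μ s ^ (1 - q⁻¹) + ENNReal.ofReal (q - 1)⁻¹ * c * μ s ^ (1 - q⁻¹) :=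
        add_le_add hsmall hlarge
    _ = _ := by ring

theorem lintegral_mul_le_lorentzOneNorm {p q : ℝ} (hpq : p.HolderConjugate q) {c : ℝ≥0}
    {f k : α → ℝ≥0∞} (hf : AEMeasurable f μ) (hk : AEMeasurable k μ)
    (hweak : ∀ t : ℝ, 0 < t → μ {y | ENNReal.ofReal t < k y} ≤ c * ENNReal.ofReal t ^ (-q)) :
    ∫⁻ y, f y * k y ∂μ ≤ (1 + ENNReal.ofReal (q - 1)⁻¹ * c) * lorentzOneNorm p f μ := by
  have hp : p⁻¹ = 1 - q⁻¹ := hpq.symm.one_sub_inv.symm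
  calc ∫⁻ y, f y * k y ∂μ = ∫⁻ y, f y ∂μ.withDensity k := by
        rw [lintegral_withDensity_eq_lintegral_mul₀ hk hf]
        simp only [Pi.mul_apply, mul_comm]
    _ = ∫⁻ t in Set.Ioi (0 : ℝ), ∫⁻ y in {y | ENNReal.ofReal t < f y}, k y ∂μ := by
        rw [lintegral_eq_lintegral_meas_ofReal_lt
          (hf.mono_ac (withDensity_absolutelyContinuous μ k))]
        exact lintegral_congr fun t =>
          withDensity_apply₀ k (nullMeasurableSet_lt aemeasurable_const hf)
    _ ≤ ∫⁻ t in Set.Ioi (0 : ℝ),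
          (1 + ENNReal.ofReal (q - 1)⁻¹ * c) * μ {y | ENNReal.ofReal t < f y} ^ p⁻¹ :=
        lintegral_mono fun t => hp ▸ setLIntegral_le_of_weakType hpq.symm.lt hk hweak _
    _ = _ := lintegral_const_mul' _ _ (by finiteness)

theorem tendsto_lorentzOneNorm_restrict {p : ℝ} (hp : 0 < p) {f : α → ℝ≥0∞}
    (hf : lorentzOneNorm p f μ ≠ ⊤) {s : ℕ → Set α} (hs : ∀ n, MeasurableSet (s n))
    (hanti : Antitone s) (hempty : ⋂ n, s n = ∅) :
    Tendsto (fun n => lorentzOneNorm p f (μ.restrict (s n))) atTop (𝓝 0) := by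
  have hmeas (ν : Measure α) : Measurable fun t : ℝ => ν {x | ENNReal.ofReal t < f x} ^ p⁻¹ :=
    (antitone_measure_ofReal_lt f ν).measurable.pow_const _
  have hpointwise : ∀ᵐ t ∂volume.restrict (Set.Ioi (0 : ℝ)),
      Tendsto (fun n => μ.restrict (s n) {x | ENNReal.ofReal t < f x} ^ p⁻¹) atTop (𝓝 0) := by
    filter_upwards [ae_lt_top (hmeas μ) hf] with t ht
    have hfinite : μ {x | ENNReal.ofReal t < f x} ≠ ⊤ := fun h => by simp [h, hp] at ht
    have hlim : Tendsto (fun n => μ.restrict {x | ENNReal.ofReal t < f x} (s n)) atTop (𝓝 0) := by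
      simpa [hempty, Function.comp_def] using tendsto_measure_iInter_atTop
        (fun n => (hs n).nullMeasurableSet) hanti
        ⟨0, ne_top_of_le_ne_top hfinite ((measure_mono (Set.subset_univ _)).trans (by simp))⟩
    simpa [Measure.restrict_apply, Measure.restrict_apply', hs, Set.inter_comm, hp] using
      hlim.ennrpow_const p⁻¹
  simpa [lorentzOneNorm] using tendsto_lintegral_of_dominated_convergence
    (fun t : ℝ => μ {x | ENNReal.ofReal t < f x} ^ p⁻¹) (fun n => hmeas (μ.restrict (s n)))
    (fun n => .of_forall fun t => ENNReal.rpow_le_rpow (Measure.restrict_apply_le _ _)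
      (inv_nonneg.2 hp.le)) hf hpointwise

end Lorentz

section Iteration

variable {α : Type*} [MeasurableSpace α] {μ ν : Measure α}

lemma ae_le_add_pow_mul_of_le_lintegral (hν : ν ≪ μ) {k : α → α → ℝ≥0∞}
    (hk : ∀ x, AEMeasurable (k x) ν) {w u : α → ℝ≥0∞} (hw : AEMeasurable w ν)
    {θ A B : ℝ≥0∞} {b : ℝ≥0} (hkθ : ∀ x, ∫⁻ y, k x y ∂ν ≤ θ)
    (hkw : ∀ x, ∫⁻ y, k x y * w y ∂ν ≤ θ * w x) (hAB : A + θ * B ≤ B)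
    (hub : ∀ᵐ x ∂μ, u x ≤ b) (hu : ∀ᵐ x ∂μ, u x ≤ A * w x + ∫⁻ y, k x y * u y ∂ν) (n : ℕ) :
    ∀ᵐ x ∂μ, u x ≤ B * w x + θ ^ n * b := by
  induction n with
  | zero =>
    filter_upwards [hub] with x hx
    simpa using hx.trans le_add_self
  | succ n ih =>
    filter_upwards [hu] with x hx
    calc u x ≤ A * w x + ∫⁻ y, k x y * u y ∂ν := hx
      _ ≤ A * w x + ∫⁻ y, (k x y * w y * B + k x y * (θ ^ n * b)) ∂ν := by
          gcongr A * w x + ?_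
          refine lintegral_mono_ae ?_
          filter_upwards [hν.ae_le ih] with y hy
          calc k x y * u y ≤ k x y * (B * w y + θ ^ n * b) := by gcongr
            _ = _ := by ring
      _ = A * w x + ((∫⁻ y, k x y * w y ∂ν) * B + (∫⁻ y, k x y ∂ν) * (θ ^ n * b)) := by
          rw [lintegral_add_left' (by fun_prop),
            lintegral_mul_const'' _ (by fun_prop), lintegral_mul_const'' _ (hk x)]
      _ ≤ A * w x + (θ * w x * B + θ * (θ ^ n * b)) := by
          gcongr
          exacts [hkw x, hkθ x]
      _ = (A + θ * B) * w x + θ ^ (n + 1) * b := by ring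
      _ ≤ B * w x + θ ^ (n + 1) * b := by gcongr

theorem ae_le_mul_of_le_lintegral (hν : ν ≪ μ) {k : α → α → ℝ≥0∞}
    (hk : ∀ x, AEMeasurable (k x) ν) {w u : α → ℝ≥0∞} (hw : AEMeasurable w ν)
    {θ A B : ℝ≥0∞} {b : ℝ≥0} (hθ : θ < 1) (hkθ : ∀ x, ∫⁻ y, k x y ∂ν ≤ θ)
    (hkw : ∀ x, ∫⁻ y, k x y * w y ∂ν ≤ θ * w x) (hAB : A + θ * B ≤ B)
    (hub : ∀ᵐ x ∂μ, u x ≤ b) (hu : ∀ᵐ x ∂μ, u x ≤ A * w x + ∫⁻ y, k x y * u y ∂ν) :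
    ∀ᵐ x ∂μ, u x ≤ B * w x := by
  filter_upwards [ae_all_iff.2
    (ae_le_add_pow_mul_of_le_lintegral hν hk hw hkθ hkw hAB hub hu)] with x hx
  have hlim : Tendsto (fun n => B * w x + θ ^ n * b) atTop (𝓝 (B * w x + 0 * b)) :=
    tendsto_const_nhds.add (ENNReal.Tendsto.mul_const
      (ENNReal.tendsto_pow_atTop_nhds_zero_of_lt_one hθ) (.inr coe_ne_top))
  simpa using ge_of_tendsto' hlim hx

end Iteration

section Riesz

variable {X : Type*} [PseudoMetricSpace X]

/-- The Riesz kernel `d(x, y)^{-a}`, without normalizing constant; it is `∞` on the diagonal when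
`0 < a`. The Newton kernel of `ℝ³` is a multiple of the case `a = 1`. -/
noncomputable def rieszKernel (a : ℝ) (x y : X) : ℝ≥0∞ := edist x y ^ (-a)

/-- The decay rate `(1 + d(o, x))^{-a}`, playing the role of `⟨x⟩^{-a}` with base point `o`. -/
noncomputable def decayWeight (a : ℝ) (o x : X) : ℝ≥0∞ := (1 + edist o x) ^ (-a)

lemma inv_mul_inv_one_add_le {r s t : ℝ≥0∞} (ht : t ≤ r + s) (ht_top : t ≠ ⊤) :
    r⁻¹ * (1 + s)⁻¹ ≤ (r⁻¹ + s⁻¹) * (1 + t)⁻¹ := by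
  rw [← div_eq_mul_inv _ (1 + t), ENNReal.le_div_iff_mul_le (by simp) (by simp [ht_top])]
  calc r⁻¹ * (1 + s)⁻¹ * (1 + t) ≤ r⁻¹ * (1 + s)⁻¹ * ((1 + s) + r) := by
        gcongr r⁻¹ * (1 + s)⁻¹ * ?_
        calc 1 + t ≤ 1 + (r + s) := by gcongr
          _ = 1 + s + r := by ring
    _ = r⁻¹ * ((1 + s)⁻¹ * (1 + s)) + r⁻¹ * r * (1 + s)⁻¹ := by ring
    _ ≤ r⁻¹ * 1 + 1 * s⁻¹ := by
        gcongr
        · exact ENNReal.inv_mul_le_one _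
        · exact ENNReal.inv_mul_le_one _
        · exact le_add_self
    _ = r⁻¹ + s⁻¹ := by ring

lemma add_rpow_le_two_rpow_mul {a : ℝ} (ha : 0 ≤ a) (r s : ℝ≥0∞) :
    (r + s) ^ a ≤ 2 ^ a * (r ^ a + s ^ a) :=
  calc (r + s) ^ a ≤ (2 * max r s) ^ a := by
        gcongr
        rw [two_mul]
        exact add_le_add (le_max_left _ _) (le_max_right _ _)
    _ = 2 ^ a * max (r ^ a) (s ^ a) := by
        rw [ENNReal.mul_rpow_of_nonneg _ _ ha, (ENNReal.monotone_rpow_of_nonneg ha).map_max]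
    _ ≤ 2 ^ a * (r ^ a + s ^ a) := by
        gcongr
        exact max_le_add_of_nonneg (by simp) (by simp)

theorem rieszKernel_mul_decayWeight_le {a : ℝ} (ha : 0 ≤ a) (o x y : X) :
    rieszKernel a x y * decayWeight a o y ≤
      2 ^ a * (rieszKernel a x y + rieszKernel a o y) * decayWeight a o x := by
  have htriangle : edist o x ≤ edist x y + edist o y := by
    simpa only [edist_comm, add_comm] using edist_triangle_right o x y
  have hbase := inv_mul_inv_one_add_le htriangle (edist_ne_top o x)
  simp only [rieszKernel, decayWeight, ENNReal.rpow_neg, ← ENNReal.inv_rpow]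
  calc (edist x y)⁻¹ ^ a * (1 + edist o y)⁻¹ ^ a
      ≤ (((edist x y)⁻¹ + (edist o y)⁻¹) * (1 + edist o x)⁻¹) ^ a := by
        rw [← ENNReal.mul_rpow_of_nonneg _ _ ha]
        gcongr
    _ ≤ _ := by
        rw [ENNReal.mul_rpow_of_nonneg _ _ ha]
        gcongr
        exact add_rpow_le_two_rpow_mul ha _ _

lemma one_le_mul_decayWeight {a : ℝ} (ha : 0 ≤ a) {o x : X} {R : ℝ≥0∞} (hx : edist o x ≤ R) :
    1 ≤ (1 + R) ^ a * decayWeight a o x :=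
  calc 1 = (1 + edist o x) ^ a * decayWeight a o x := by
        have hpos : (1 + edist o x) ^ a ≠ 0 := by simp [ENNReal.rpow_eq_zero_iff, edist_ne_top]
        rw [decayWeight, ENNReal.rpow_neg, ENNReal.mul_inv_cancel hpos
          (ENNReal.rpow_ne_top_of_nonneg ha (by finiteness))]
    _ ≤ _ := by gcongr

lemma toReal_decayWeight (a : ℝ) (o x : X) :
    (decayWeight a o x).toReal = ((1 + dist x o) ^ a)⁻¹ := by
  rw [decayWeight, ← ENNReal.toReal_rpow, ENNReal.toReal_add one_ne_top (edist_ne_top o x),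
    ENNReal.toReal_one, ← dist_edist, dist_comm, Real.rpow_neg (by positivity)]

variable [MeasurableSpace X] {μ : Measure X}

lemma measure_lt_rieszKernel_le {a d : ℝ} (ha : 0 < a) {c : ℝ≥0}
    (hμ : ∀ (x : X) (r : ℝ), 0 < r → μ (ball x r) ≤ c * ENNReal.ofReal r ^ d)
    (x : X) {t : ℝ} (ht : 0 < t) :
    μ {y | ENNReal.ofReal t < rieszKernel a x y} ≤ c * ENNReal.ofReal t ^ (-(d / a)) := by
  have hr : ENNReal.ofReal (t ^ (-a⁻¹)) = ENNReal.ofReal t ^ (-a⁻¹) :=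
    (ENNReal.ofReal_rpow_of_pos ht).symm
  have hsub : {y | ENNReal.ofReal t < rieszKernel a x y} ⊆ ball x (t ^ (-a⁻¹)) := by
    intro y (hy : ENNReal.ofReal t < edist x y ^ (-a))
    rw [ENNReal.rpow_neg, ← ENNReal.inv_rpow, ← ENNReal.rpow_inv_lt_iff ha,
      ENNReal.lt_inv_iff_lt_inv, ← ENNReal.rpow_neg, ← hr, edist_comm] at hy
    rwa [← Metric.eball_ofReal, Metric.mem_eball]
  calc _ ≤ μ (ball x (t ^ (-a⁻¹))) := measure_mono hsub
    _ ≤ c * (ENNReal.ofReal t ^ (-a⁻¹)) ^ d := hr ▸ hμ x _ (Real.rpow_pos_of_pos ht _)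
    _ = _ := by rw [← ENNReal.rpow_mul]; ring_nf

lemma setLIntegral_mul_le_of_edist_le {a : ℝ} (ha : 0 ≤ a) {k u : X → ℝ≥0∞} {b R : ℝ≥0}
    (hu : ∀ᵐ y ∂μ, u y ≤ b) {s : Set X} (hs : MeasurableSet s) {o : X}
    (hsR : ∀ y ∈ s, edist o y ≤ R) :
    ∫⁻ y in s, k y * u y ∂μ ≤ b * (1 + R) ^ a * ∫⁻ y, k y * decayWeight a o y ∂μ := by
  have hconst : (b : ℝ≥0∞) * (1 + R) ^ a ≠ ⊤ :=
    mul_ne_top coe_ne_top (ENNReal.rpow_ne_top_of_nonneg ha (by finiteness))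
  calc ∫⁻ y in s, k y * u y ∂μ
      ≤ ∫⁻ y in s, b * (1 + R) ^ a * (k y * decayWeight a o y) ∂μ := by
        refine lintegral_mono_ae ?_
        filter_upwards [ae_restrict_mem hs, ae_restrict_of_ae hu] with y hys hyb
        calc k y * u y ≤ k y * (b * 1) := by rw [mul_one]; gcongr
          _ ≤ k y * (b * ((1 + R) ^ a * decayWeight a o y)) := by
              gcongr
              exact one_le_mul_decayWeight ha (hsR y hys)
          _ = _ := by ring
    _ ≤ ∫⁻ y, b * (1 + R) ^ a * (k y * decayWeight a o y) ∂μ := setLIntegral_le_lintegral _ _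
    _ = _ := lintegral_const_mul' _ _ hconst

variable [OpensMeasurableSpace X]

@[fun_prop]
lemma measurable_rieszKernel (a : ℝ) (x : X) : Measurable (rieszKernel a x) :=
  measurable_edist_right.pow_const _

@[fun_prop]
lemma measurable_decayWeight (a : ℝ) (o : X) : Measurable (decayWeight a o) :=
  (measurable_edist_right.const_add 1).pow_const _

theorem lintegral_mul_rieszKernel_mul_decayWeight_le {a : ℝ} (ha : 0 ≤ a) {W : X → ℝ≥0∞}
    (hW : AEMeasurable W μ) {M : ℝ≥0∞} (hM : ∀ x, ∫⁻ y, W y * rieszKernel a x y ∂μ ≤ M)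
    (o x : X) :
    ∫⁻ y, W y * rieszKernel a x y * decayWeight a o y ∂μ ≤
      2 ^ a * (M + M) * decayWeight a o x :=
  calc _ ≤ ∫⁻ y, (W y * rieszKernel a x y + W y * rieszKernel a o y) *
          (2 ^ a * decayWeight a o x) ∂μ := by
        refine lintegral_mono fun y => ?_
        calc W y * rieszKernel a x y * decayWeight a o y
            = W y * (rieszKernel a x y * decayWeight a o y) := mul_assoc _ _ _
          _ ≤ W y * (2 ^ a * (rieszKernel a x y + rieszKernel a o y) * decayWeight a o x) := by
              gcongr W y * ?_
              exact rieszKernel_mul_decayWeight_le ha o x y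
          _ = _ := by ring
    _ = ((∫⁻ y, W y * rieszKernel a x y ∂μ) + ∫⁻ y, W y * rieszKernel a o y ∂μ) *
          (2 ^ a * decayWeight a o x) := by
        rw [lintegral_mul_const'' _ (by fun_prop), lintegral_add_left' (by fun_prop)]
    _ ≤ (M + M) * (2 ^ a * decayWeight a o x) := by
        gcongr
        exacts [hM x, hM o]
    _ = _ := by ring

theorem exists_forall_lintegral_mul_rieszKernel_le {a d p : ℝ} (ha : 0 < a)
    (hp : p.HolderConjugate (d / a)) {c : ℝ≥0}
    (hμ : ∀ (x : X) (r : ℝ), 0 < r → μ (ball x r) ≤ c * ENNReal.ofReal r ^ d) {W : X → ℝ≥0∞}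
    (hW : AEMeasurable W μ) :
    ∃ K : ℝ≥0, ∀ (s : Set X) (x : X),
      ∫⁻ y in s, W y * rieszKernel a x y ∂μ ≤ K * lorentzOneNorm p W (μ.restrict s) := by
  refine ⟨1 + (d / a - 1)⁻¹.toNNReal * c, fun s x => ?_⟩
  refine (lintegral_mul_le_lorentzOneNorm hp hW.restrict (by fun_prop) fun t ht =>
    (Measure.restrict_apply_le _ _).trans (measure_lt_rieszKernel_le ha hμ x ht)).trans_eq ?_
  push_cast
  rfl

lemma tendsto_lorentzOneNorm_restrict_lt_edist {p : ℝ} (hp : 0 < p) {W : X → ℝ≥0∞}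
    (hW : lorentzOneNorm p W μ ≠ ⊤) (o : X) :
    Tendsto (fun n : ℕ => lorentzOneNorm p W (μ.restrict {y | (n : ℝ≥0∞) < edist o y}))
      atTop (𝓝 0) := by
  refine tendsto_lorentzOneNorm_restrict hp hW
    (fun n => measurableSet_lt measurable_const measurable_edist_right)
    (fun m n hmn y (hy : (n : ℝ≥0∞) < edist o y) => (Nat.cast_le.2 hmn).trans_lt hy)
    (Set.eq_empty_of_forall_notMem ?_)
  intro y hy
  obtain ⟨n, hn⟩ := ENNReal.exists_nat_gt (edist_ne_top o y)
  exact hn.not_gt (Set.mem_iInter.1 hy n)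

theorem exists_nat_setLIntegral_mul_rieszKernel_le {a d p : ℝ} (ha : 0 < a)
    (hp : p.HolderConjugate (d / a)) {c : ℝ≥0}
    (hμ : ∀ (x : X) (r : ℝ), 0 < r → μ (ball x r) ≤ c * ENNReal.ofReal r ^ d)
    {W : X → ℝ≥0∞} (hW : AEMeasurable W μ) (hWp : lorentzOneNorm p W μ ≠ ⊤)
    {θ : ℝ≥0∞} (hθ : 0 < θ) (o : X) :
    ∃ n : ℕ, ∀ x, ∫⁻ y in {y | n < edist o y}, W y * rieszKernel a x y ∂μ ≤ θ ∧
      ∫⁻ y in {y | n < edist o y}, W y * rieszKernel a x y * decayWeight a o y ∂μ ≤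
        θ * decayWeight a o x := by
  obtain ⟨K, hK⟩ := exists_forall_lintegral_mul_rieszKernel_le ha hp hμ hW
  let M (n : ℕ) : ℝ≥0∞ := K * lorentzOneNorm p W (μ.restrict {y | n < edist o y})
  have hM : Tendsto M atTop (𝓝 0) := by
    simpa using ENNReal.Tendsto.const_mul
      (tendsto_lorentzOneNorm_restrict_lt_edist hp.pos hWp o) (.inr coe_ne_top)
  have hM_double : Tendsto (fun n => 2 ^ a * (M n + M n)) atTop (𝓝 0) := by
    simpa using ENNReal.Tendsto.const_mul (hM.add hM)
      (.inr (ENNReal.rpow_ne_top_of_nonneg ha.le ofNat_ne_top))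
  obtain ⟨n, hn, hn_double⟩ :=
    ((hM.eventually_le_const hθ).and (hM_double.eventually_le_const hθ)).exists
  refine ⟨n, fun x => ⟨(hK _ x).trans hn, ?_⟩⟩
  exact (lintegral_mul_rieszKernel_mul_decayWeight_le ha.le hW.restrict (hK _) o x).trans
    (by gcongr)

theorem exists_setLIntegral_mul_rieszKernel_mul_le {a : ℝ} (ha : 0 ≤ a) {W u : X → ℝ≥0∞}
    (hW : AEMeasurable W μ) {M : ℝ≥0∞} (hM_top : M ≠ ⊤)
    (hM : ∀ x, ∫⁻ y, W y * rieszKernel a x y ∂μ ≤ M) {b : ℝ≥0} (hub : ∀ᵐ y ∂μ, u y ≤ b)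
    (R : ℝ≥0) (o : X) :
    ∃ A : ℝ≥0, ∀ x, ∫⁻ y in {y | edist o y ≤ R}, W y * rieszKernel a x y * u y ∂μ ≤
      A * decayWeight a o x := by
  have hfinite : (b : ℝ≥0∞) * (1 + R) ^ a * (2 ^ a * (M + M)) ≠ ⊤ := by
    finiteness
  refine ⟨(b * (1 + R) ^ a * (2 ^ a * (M + M))).toNNReal, fun x => ?_⟩
  calc ∫⁻ y in {y | edist o y ≤ R}, W y * rieszKernel a x y * u y ∂μ
      ≤ b * (1 + R) ^ a * ∫⁻ y, W y * rieszKernel a x y * decayWeight a o y ∂μ :=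
        setLIntegral_mul_le_of_edist_le ha hub
          (measurableSet_le measurable_edist_right measurable_const) fun _ hy => hy
    _ ≤ b * (1 + R) ^ a * (2 ^ a * (M + M) * decayWeight a o x) := by
        gcongr
        exact lintegral_mul_rieszKernel_mul_decayWeight_le ha hW hM o x
    _ = _ := by rw [coe_toNNReal hfinite]; ring

theorem exists_ae_le_mul_decayWeight_of_le_lintegral {a d p : ℝ} (ha : 0 < a)
    (hp : p.HolderConjugate (d / a)) {c : ℝ≥0}
    (hμ : ∀ (x : X) (r : ℝ), 0 < r → μ (ball x r) ≤ c * ENNReal.ofReal r ^ d)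
    {W u : X → ℝ≥0∞} (hW : AEMeasurable W μ) (hWp : lorentzOneNorm p W μ ≠ ⊤) {b : ℝ≥0}
    (hub : ∀ᵐ x ∂μ, u x ≤ b)
    (hu : ∀ᵐ x ∂μ, u x ≤ ∫⁻ y, W y * rieszKernel a x y * u y ∂μ) (o : X) :
    ∃ B : ℝ≥0, ∀ᵐ x ∂μ, u x ≤ B * decayWeight a o x := by
  obtain ⟨K, hK⟩ := exists_forall_lintegral_mul_rieszKernel_le ha hp hμ hW
  obtain ⟨n, hfar⟩ := exists_nat_setLIntegral_mul_rieszKernel_le ha hp hμ hW hWp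
    (θ := 2⁻¹) (by simp) o
  obtain ⟨A, hnear⟩ := exists_setLIntegral_mul_rieszKernel_mul_le ha.le hW
    (mul_ne_top coe_ne_top hWp) (fun x => by simpa using hK Set.univ x) hub n o
  have hu_split : ∀ᵐ x ∂μ, u x ≤ A * decayWeight a o x +
      ∫⁻ y in {y | n < edist o y}, W y * rieszKernel a x y * u y ∂μ := by
    filter_upwards [hu] with x hx
    have hs : MeasurableSet {y | edist o y ≤ n} :=
      measurableSet_le measurable_edist_right measurable_const
    calc u x ≤ ∫⁻ y, W y * rieszKernel a x y * u y ∂μ := hx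
      _ = _ := (lintegral_add_compl _ hs).symm
      _ ≤ _ := by
          simp only [Set.compl_ofPred, not_le]
          gcongr
          exact hnear x
  have hfixed : (A : ℝ≥0∞) + 2⁻¹ * (2 * A) ≤ 2 * A := by
    rw [← mul_assoc, ENNReal.inv_mul_cancel two_ne_zero ofNat_ne_top, one_mul, two_mul]
  refine ⟨2 * A, ?_⟩
  push_cast
  exact ae_le_mul_of_le_lintegral Measure.restrict_le_self.absolutelyContinuous
    (fun x => by fun_prop) (by fun_prop) (by simp) (fun x => (hfar x).1) (fun x => (hfar x).2)
    hfixed hub hu_split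

end Riesz

theorem resonance_decay_general {X F G : Type*} [PseudoMetricSpace X] [MeasurableSpace X]
    [OpensMeasurableSpace X] [SeminormedAddCommGroup F] [SeminormedAddCommGroup G] {μ : Measure X}
    {a d p : ℝ} (ha : 0 < a) (hp : p.HolderConjugate (d / a)) {c : ℝ≥0}
    (hμ : ∀ (x : X) (r : ℝ), 0 < r → μ (ball x r) ≤ c * ENNReal.ofReal r ^ d)
    {V : X → G} (hVmeas : AEStronglyMeasurable V μ)
    (hV : lorentzOneNorm p (fun y => ‖V y‖ₑ) μ < ⊤)
    {φ : X → F} (hφbdd : ∃ C : ℝ, ∀ᵐ x ∂μ, ‖φ x‖ ≤ C)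
    (hle : ∀ᵐ x ∂μ, ‖φ x‖ₑ ≤ ∫⁻ y, ‖V y‖ₑ * rieszKernel a x y * ‖φ y‖ₑ ∂μ) (o : X) :
    ∃ C : ℝ, ∀ᵐ x ∂μ, ‖φ x‖ ≤ C / (1 + dist x o) ^ a := by
  obtain ⟨C, hC⟩ := hφbdd
  have hub : ∀ᵐ x ∂μ, ‖φ x‖ₑ ≤ C.toNNReal := hC.mono fun x hx => by
    rw [← ofReal_norm]
    exact ENNReal.ofReal_le_ofReal hx
  obtain ⟨B, hB⟩ := exists_ae_le_mul_decayWeight_of_le_lintegral ha hp hμ hVmeas.enorm hV.ne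
    hub hle o
  refine ⟨B, hB.mono fun x hx => ?_⟩
  have hfinite : (B : ℝ≥0∞) * decayWeight a o x ≠ ⊤ := by
    refine mul_ne_top coe_ne_top ?_
    simp [decayWeight, ENNReal.rpow_eq_top_iff, edist_ne_top]
  simpa only [toReal_enorm, ENNReal.toReal_mul, coe_toReal, toReal_decayWeight, div_eq_mul_inv]
    using ENNReal.toReal_mono hfinite hx

lemma memL321_iff_lorentzOneNorm_lt_top {G : Type*} [NormedAddCommGroup G] {f : E3 → G} :
    MemL321 f ↔ lorentzOneNorm (3 / 2) (fun x => ‖f x‖ₑ) volume < ⊤ := by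
  have hnorm : lorentzNorm321 f = lorentzOneNorm (3 / 2) (fun x => ‖f x‖ₑ) volume := by
    refine setLIntegral_congr_fun measurableSet_Ioi fun t ht => ?_
    simp only [← ofReal_norm, inv_div,
      ENNReal.ofReal_lt_ofReal_iff_of_nonneg (le_of_lt (Set.mem_Ioi.1 ht))]
  rw [MemL321, hnorm]

lemma addHaar_ball_le {E : Type*} [NormedAddCommGroup E] [NormedSpace ℝ E] [FiniteDimensional ℝ E]
    [MeasurableSpace E] [BorelSpace E] (μ : Measure E) [μ.IsAddHaarMeasure] (x : E) (r : ℝ)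
    (hr : 0 < r) :
    μ (ball x r) ≤
      (μ (ball (0 : E) 1)).toNNReal * ENNReal.ofReal r ^ (Module.finrank ℝ E : ℝ) := by
  rw [Measure.addHaar_ball_of_pos μ x hr, coe_toNNReal measure_ball_lt_top.ne, mul_comm,
    ENNReal.rpow_natCast, ENNReal.ofReal_pow hr.le]

lemma enorm_mul_div_norm_sub_le {E : Type*} [SeminormedAddCommGroup E] (x y : E) (v : ℝ) (z : ℂ) :
    ‖(v : ℂ) * z / (‖x - y‖ : ℂ)‖ₑ ≤ ‖v‖ₑ * rieszKernel 1 x y * ‖z‖ₑ := by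
  rcases eq_or_ne ‖x - y‖ 0 with hxy | hxy
  · simp [hxy]
  refine le_of_eq ?_
  have hdist_ne : (‖x - y‖ : ℂ) ≠ 0 := mod_cast hxy
  have hdist : ‖(‖x - y‖ : ℂ)‖ₑ = edist x y := by
    rw [← ofReal_norm, Complex.norm_real, norm_norm, edist_dist, dist_eq_norm]
  have hv : ‖(v : ℂ)‖ₑ = ‖v‖ₑ := by rw [← ofReal_norm, Complex.norm_real, ofReal_norm]
  rw [div_eq_mul_inv, enorm_mul, enorm_mul, enorm_inv hdist_ne, hdist, hv, rieszKernel,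
    ENNReal.rpow_neg_one]
  ring

lemma norm_neg_one_div_four_pi_le_one : ‖-(1 / (4 * (Real.pi : ℂ)))‖ ≤ 1 := by
  have hpi : 1 ≤ 4 * Real.pi := by linarith [Real.pi_gt_three]
  simpa [abs_of_pos Real.pi_pos, mul_inv] using inv_le_one_of_one_le₀ hpi

lemma enorm_le_lintegral_of_eq_mul_integral {E : Type*} [SeminormedAddCommGroup E]
    [MeasurableSpace E] {μ : Measure E} {V : E → ℝ} {φ : E → ℂ} {κ : ℂ} (hκ : ‖κ‖ ≤ 1) {x : E}
    (hφ : φ x = κ * ∫ y, (V y : ℂ) * φ y / (‖x - y‖ : ℂ) ∂μ) :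
    ‖φ x‖ₑ ≤ ∫⁻ y, ‖V y‖ₑ * rieszKernel 1 x y * ‖φ y‖ₑ ∂μ :=
  calc ‖φ x‖ₑ ≤ 1 * ‖∫ y, (V y : ℂ) * φ y / (‖x - y‖ : ℂ) ∂μ‖ₑ := by
        rw [hφ, enorm_mul]
        gcongr
        simpa [← ofReal_norm] using hκ
    _ ≤ ∫⁻ y, ‖(V y : ℂ) * φ y / (‖x - y‖ : ℂ)‖ₑ ∂μ := by
        rw [one_mul]
        exact enorm_integral_le_lintegral_enorm _
    _ ≤ _ := lintegral_mono fun y => enorm_mul_div_norm_sub_le x y (V y) (φ y)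

/-- Lemma 2.3, first part: every `φ ∈ 𝓜` lies in `⟨x⟩⁻¹ L^∞`. -/
theorem resonance_decay (V : E3 → ℝ) (hVmeas : Measurable V) (hV : MemL321 V)
    (φ : E3 → ℂ) (hφmeas : Measurable φ) (hφbdd : ∃ C : ℝ, ∀ᵐ x : E3 ∂volume, ‖φ x‖ ≤ C)
    (heq : ∀ᵐ x : E3 ∂volume,
      Integrable (fun y : E3 => (V y : ℂ) * φ y / (‖x - y‖ : ℂ)) volume ∧
      φ x = -(1 / (4 * (Real.pi : ℂ))) * ∫ y : E3, (V y : ℂ) * φ y / (‖x - y‖ : ℂ)) :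
    ∃ C : ℝ, ∀ᵐ x : E3 ∂volume, ‖φ x‖ ≤ C / (1 + ‖x‖) := by
  have hball (x : E3) (r : ℝ) (hr : 0 < r) : volume (ball x r) ≤
      (volume (ball (0 : E3) 1)).toNNReal * ENNReal.ofReal r ^ (3 : ℝ) := by
    simpa only [finrank_euclideanSpace_fin, Nat.cast_ofNat] using addHaar_ball_le volume x r hr
  have hp : (3 / 2 : ℝ).HolderConjugate (3 / 1) := by
    constructor <;> norm_num
  simpa only [Real.rpow_one, dist_zero_right] using resonance_decay_general one_pos hp
    hball hVmeas.aestronglyMeasurable (memL321_iff_lorentzOneNorm_lt_top.1 hV) hφbdd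
    (heq.mono fun x hx =>
      enorm_le_lintegral_of_eq_mul_integral norm_neg_one_div_four_pi_le_one hx.2) 0
end
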